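/- arXiv:2512.24913 — 3 statements merged into one kernel-verified Lean document; each statement's English description precedes it below -/
import Mathlib

section
/- Let d ≥ 3 and fix linearly independent vectors e_1, e_2 ∈ ℝ^d. For a d×(d−2) real matrix E with columns e_3,…,e_d ∈ ℝ^d, let A(E) be the d×d matrix with columns e_1, e_2, e_3, …, e_d, and let Λ_E = {z_1 e_1 + ⋯ + z_d e_d : z ∈ ℤ^d}. Let Ω ⊂ ℝ^{d(d−2)} be a product of compact intervals ∏_{i,j} [u_{i,j}, v_{i,j}] in the entries of E such that det A(E) ≠ 0 for every E ∈ Ω. Then there exists K = K(Ω) ≥ 1 with the following property: for every function φ : (0,∞) → (0,∞) monotonically decreasing to zero such that both series ∑_{ν=1}^∞ ν^{d−1} φ(2^ν/K) and ∑_{ν=1}^∞ ν (log(1/φ(K·2^ν)))^{d−2} φ(2^ν/K) converge, for Lebesgue-almost every E ∈ Ω there exists η = η(E) > 0 such that every point x = z_1 e_1 + ⋯ + z_d e_d of Λ_E with (z_3,…,z_d) ≠ 0 satisfies ∏_{j=1}^d |x_j| ≥ η · φ(max_{1≤j≤d} |x_j|). -/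
/-!
The proof is a Borel–Cantelli argument over the dyadic shells `2 ^ ν ≤ |z| < 2 ^ (ν + 1)`, where
`|z|` is the maximum norm of the coordinates. Write `d = n + 2`, `w = (z₁, z₂)`, `p = (z₃, …, z_d)`
and `δ = φ (2 ^ ν / K)`. Since `Ω` is compact and `det A(E) ≠ 0` on it, `‖x‖` is comparable to `|z|`
uniformly on `Ω` (`exists_norm_bounds`), so with `K ≥ 1 / c` a violation of the inequality for
`η = 1` puts `x` in the set `B` of points with `‖x‖ ≍ 2 ^ ν` and `∏ |x_i| < δ`.

* The volume of `B` is `O(δ (1 + log(2 ^ (ν d) / δ)) ^ (d - 2))` (`volume_shell_le_log`): fixing a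
  coordinate of size `2 ^ ν` leaves the corresponding region of a cube in dimension `d - 1`, whose
  volume involves the `(d - 2)`-th power of the logarithm (`volume_prodSet_le`).
* If `p ≠ 0` has size `Q`, the random point `x(E)` has density `O(Q ^ (-d))`
  (`volume_point_mem_le`). Moreover `x(E)` lies within `O(Q)` of the plane point `w₁ e₁ + w₂ e₂`,
  and a given point is that close to only `O(Q ^ 2)` of these (`tsum_volume_inter_ball_le`). Summed
  over `w`, the probability that `x(E) ∈ B` is thus `O(Q ^ (2 - d) |B|)`, and there are
  `O(Q ^ (d - 2))` vectors `p` of size `Q ≍ 2 ^ k`. Hence each of the `ν + 1` dyadic scales of `p`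
  contributes `O(|B|)` (`volume_exists_mem_le`).

The total for level `ν` is `O(ν ^ (d - 1) δ + ν log(1 / φ (K 2 ^ ν)) ^ (d - 2) δ)`
(`shell_sum_bound`), which is summable. Almost every `E` is therefore exceptional on finitely many
shells only, i.e. for finitely many `z`; almost surely none of these points has a zero coordinate
(`ae_prod_ne_zero`), so they are absorbed by a small `η`.
-/


open MeasureTheory Filter Set

noncomputable section

/-- The columns `e₁, e₂, e₃, …, e_d` of the matrix `A(E)`: the first two are the fixed vectors
`e₁, e₂`, the remaining ones are the columns of `E`. -/
def latticeCols {d : ℕ} (e₁ e₂ : Fin d → ℝ) (E : Fin d → Fin (d - 2) → ℝ) (j : Fin d) :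
    Fin d → ℝ :=
  if h0 : (j : ℕ) = 0 then e₁
  else if h1 : (j : ℕ) = 1 then e₂
  else fun i => E i ⟨(j : ℕ) - 2, by have := j.isLt; omega⟩

/-! ### Volume of the region where the product of the coordinates is small -/

/-- Fubini for the splitting of `ℝ^{m+1}` into its `i`-th coordinate and the others. -/
theorem volume_slice {m : ℕ} (i : Fin (m + 1)) (S : Set (ℝ × (Fin m → ℝ)))
    (hS : MeasurableSet S) :
    volume {x : Fin (m + 1) → ℝ | (x i, fun j => x (i.succAbove j)) ∈ S} =
      ∫⁻ t, volume {y : Fin m → ℝ | (t, y) ∈ S} := by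
  have h := (volume_preserving_piFinSuccAbove (fun _ : Fin (m + 1) => ℝ) i).measure_preimage_equiv S
  have h2 : (volume : Measure (ℝ × (Fin m → ℝ))) S = _ := Measure.prod_apply (μ := volume) (ν := volume) hS
  rw [h2] at h
  exact h

theorem lintegral_abs_rpow (ε R : ℝ) (hε : 0 < ε) (hR : 0 < R) :
    ∫⁻ t in Icc (-R) R, ENNReal.ofReal (|t| ^ (ε - 1)) ≤ ENNReal.ofReal (2 * (R ^ ε / ε)) := by
  have h1 : ∫⁻ t in Icc 0 R, ENNReal.ofReal (|t| ^ (ε - 1)) = ENNReal.ofReal (R ^ ε / ε) := by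
    rw [setLIntegral_congr_fun (g := fun t => ENNReal.ofReal (t ^ (ε - 1))) measurableSet_Icc
      (fun t ht => by simp only [abs_of_nonneg ht.1])]
    rw [← ofReal_integral_eq_lintegral_ofReal]
    · rw [integral_Icc_eq_integral_Ioc, ← intervalIntegral.integral_of_le hR.le,
        integral_rpow (by left; linarith), Real.zero_rpow (by linarith)]
      simp
    · have := intervalIntegral.intervalIntegrable_rpow' (a := 0) (b := R) (r := ε - 1) (by linarith)
      rw [intervalIntegrable_iff_integrableOn_Icc_of_le hR.le] at this
      exact this
    · filter_upwards [ae_restrict_mem measurableSet_Icc] with t ht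
      exact Real.rpow_nonneg ht.1 _
  have h2 : ∫⁻ t in Icc (-R) 0, ENNReal.ofReal (|t| ^ (ε - 1)) = ENNReal.ofReal (R ^ ε / ε) := by
    rw [← h1]
    have := (Measure.measurePreserving_neg (volume : Measure ℝ)).setLIntegral_comp_preimage_emb
      (MeasurableEquiv.neg ℝ).measurableEmbedding (fun t => ENNReal.ofReal (|t| ^ (ε - 1))) (Icc 0 R)
    rw [← this]
    simp
  calc _ ≤ ∫⁻ t in Icc (-R) 0 ∪ Icc 0 R, ENNReal.ofReal (|t| ^ (ε - 1)) :=
        lintegral_mono_set (fun t ht => by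
          rcases le_total t 0 with h | h
          · exact Or.inl ⟨ht.1, h⟩
          · exact Or.inr ⟨h, ht.2⟩)
    _ ≤ _ := lintegral_union_le _ _ _
    _ = _ := by
      rw [h1, h2, two_mul, ENNReal.ofReal_add] <;> positivity

/-- The part of the cube of side `2R` on which the product of the coordinates is less than `δ`. -/
def prodSet (m : ℕ) (R δ : ℝ) : Set (Fin m → ℝ) := {y | (∀ i, |y i| ≤ R) ∧ ∏ i, |y i| < δ}

/-- Induction on the dimension, slicing along the first coordinate. The base case interpolates
`min δ R ≤ δ ^ (1 - ε) * R ^ ε`; every further coordinate costs a factor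
`∫_{-R}^{R} |t| ^ (ε - 1) dt = 2 R ^ ε / ε`, so that only `m` powers of `1 / ε` occur in dimension
`m + 1`. -/
theorem volume_prodSet_le (m : ℕ) (ε R δ : ℝ) (hε : 0 < ε) (hε1 : ε ≤ 1) (hR : 0 < R) (hδ : 0 < δ) :
    volume (prodSet (m + 1) R δ) ≤
      ENNReal.ofReal (2 ^ (m + 1) * δ ^ (1 - ε) * (R ^ ε) ^ (m + 1) / ε ^ m) := by
  induction m generalizing δ with
  | zero =>
    have hsub : prodSet 1 R δ ⊆ Icc (fun _ => -min δ R) (fun _ => min δ R) := by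
      rintro y ⟨h1, h2⟩
      simp only [Finset.univ_unique, Fin.default_eq_zero, Fin.isValue, Finset.prod_singleton] at h2
      have h3 : |y 0| ≤ min δ R := le_min h2.le (h1 0)
      rw [abs_le] at h3
      constructor <;> intro i <;> fin_cases i
      · exact h3.1
      · exact h3.2
    refine (measure_mono hsub).trans ?_
    rw [Real.volume_Icc_pi]
    rw [Fin.prod_univ_one]
    apply ENNReal.ofReal_le_ofReal
    have hm : 0 < min δ R := lt_min hδ hR
    have : min δ R ≤ δ ^ (1 - ε) * R ^ ε := by
      calc min δ R = (min δ R) ^ (1 - ε) * (min δ R) ^ ε := by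
            rw [← Real.rpow_add hm]; simp
        _ ≤ _ := by
          gcongr
          · exact min_le_left _ _
          · exact min_le_right _ _
    simp only [zero_add, pow_one, pow_zero, div_one]
    linarith
  | succ m ih =>
    set S : Set (ℝ × (Fin (m + 1) → ℝ)) :=
      {q | (|q.1| ≤ R ∧ ∀ i, |q.2 i| ≤ R) ∧ |q.1| * ∏ i, |q.2 i| < δ} with hSdef
    have hS : MeasurableSet S := by
      have e : S = ({q | |q.1| ≤ R} ∩ ⋂ i, {q : ℝ × (Fin (m + 1) → ℝ) | |q.2 i| ≤ R}) ∩
          {q | |q.1| * ∏ i, |q.2 i| < δ} := by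
        ext q; simp [S]
      rw [e]
      refine ((measurableSet_le (by fun_prop) (by fun_prop)).inter (MeasurableSet.iInter fun i =>
        measurableSet_le (by fun_prop) (by fun_prop))).inter
        (measurableSet_lt (by fun_prop) (by fun_prop))
    have h := volume_slice 0 S hS
    have e : prodSet (m + 1 + 1) R δ = {x : Fin (m + 1 + 1) → ℝ | (x 0, fun j => x ((0 : Fin _).succAbove j)) ∈ S} := by
      ext x
      simp [prodSet, S, Fin.forall_fin_succ, Fin.prod_univ_succ]
    rw [e, h]
    -- The slice `t = 0` has to be excluded: there the condition on the product is void.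
    have hb : ∀ᵐ t : ℝ, volume {y : Fin (m + 1) → ℝ | (t, y) ∈ S} ≤
        (Icc (-R) R).indicator (fun t => ENNReal.ofReal (2 ^ (m + 1) * δ ^ (1 - ε) * (R ^ ε) ^ (m + 1) / ε ^ m)
          * ENNReal.ofReal (|t| ^ (ε - 1))) t := by
      filter_upwards [compl_mem_ae_iff.2 (measure_singleton (0 : ℝ))] with t ht
      have ht0 : 0 < |t| := abs_pos.2 ht
      by_cases hm : t ∈ Icc (-R) R
      · rw [indicator_of_mem hm, ← ENNReal.ofReal_mul (by positivity)]
        refine (measure_mono ?_).trans ((ih (δ / |t|) (by positivity)).trans (le_of_eq ?_))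
        · rintro y ⟨⟨_, h2⟩, h3⟩
          refine ⟨h2, ?_⟩
          rw [lt_div_iff₀ ht0, mul_comm]
          exact h3
        · congr 1
          rw [Real.div_rpow hδ.le ht0.le, show ε - 1 = -(1 - ε) by ring, Real.rpow_neg ht0.le]
          field_simp
      · rw [indicator_of_notMem hm]
        simp only [nonpos_iff_eq_zero]
        convert measure_empty (μ := (volume : Measure (Fin (m+1) → ℝ)))
        ext y
        simp only [mem_ofPred_eq, mem_empty_iff_false, iff_false, S]
        rintro ⟨⟨h1, _⟩, _⟩
        exact hm (abs_le.1 h1)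
    refine (lintegral_mono_ae hb).trans ?_
    rw [lintegral_indicator measurableSet_Icc, lintegral_const_mul' _ _ ENNReal.ofReal_ne_top]
    refine (mul_le_mul_right (lintegral_abs_rpow ε R hε hR) _).trans (le_of_eq ?_)
    rw [← ENNReal.ofReal_mul (by positivity)]
    congr 1
    rw [pow_succ (R ^ ε) (m + 1), pow_succ ε m]
    field_simp
    ring

/-- On the shell `r ≤ ‖x‖ ≤ R` some coordinate has absolute value at least `r`; the product of the
remaining ones is then less than `δ / r`, which reduces the dimension by one. -/
theorem volume_shell_le (m : ℕ) (ε r R δ : ℝ) (hε : 0 < ε) (hε1 : ε ≤ 1) (hr : 0 < r) (hR : 0 < R)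
    (hδ : 0 < δ) :
    volume {x : Fin (m + 2) → ℝ | r ≤ ‖x‖ ∧ ‖x‖ ≤ R ∧ ∏ i, |x i| < δ} ≤
      ENNReal.ofReal ((m + 2) * (2 * R * (2 ^ (m + 1) * (δ / r) ^ (1 - ε) * (R ^ ε) ^ (m + 1) / ε ^ m))) := by
  set V := 2 ^ (m + 1) * (δ / r) ^ (1 - ε) * (R ^ ε) ^ (m + 1) / ε ^ m with hV
  have hV0 : 0 ≤ V := by positivity
  have hcov : {x : Fin (m + 2) → ℝ | r ≤ ‖x‖ ∧ ‖x‖ ≤ R ∧ ∏ i, |x i| < δ} ⊆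
      ⋃ i : Fin (m + 2), {x | (x i, fun j => x (i.succAbove j)) ∈ Icc (-R) R ×ˢ prodSet (m + 1) R (δ / r)} := by
    rintro x ⟨h1, h2, h3⟩
    obtain ⟨i, hi⟩ : ∃ i, r ≤ |x i| := by
      by_contra! hcon
      exact absurd ((pi_norm_lt_iff hr).2 hcon) (not_lt.2 h1)
    have hle : ∀ j, |x j| ≤ R := fun j => (norm_le_pi_norm x j).trans h2
    refine mem_iUnion.2 ⟨i, abs_le.1 (hle i), fun j => hle _, ?_⟩
    rw [Fin.prod_univ_succAbove _ i] at h3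
    rw [lt_div_iff₀ hr]
    refine lt_of_le_of_lt ?_ h3
    rw [mul_comm]
    have : 0 ≤ ∏ j, |x (i.succAbove j)| := Finset.prod_nonneg fun _ _ => abs_nonneg _
    gcongr
  have hmeas : MeasurableSet (prodSet (m + 1) R (δ / r)) := by
    have e : prodSet (m + 1) R (δ / r) = (⋂ i, {q : (Fin (m + 1) → ℝ) | |q i| ≤ R}) ∩
          {q | ∏ i, |q i| < δ / r} := by
      ext q; simp [prodSet]
    rw [e]
    exact (MeasurableSet.iInter fun i =>
        measurableSet_le (by fun_prop) (by fun_prop)).inter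
        (measurableSet_lt (by fun_prop) (by fun_prop))
  have hpiece : ∀ i : Fin (m + 2), volume {x : Fin (m + 2) → ℝ | (x i, fun j => x (i.succAbove j)) ∈
      Icc (-R) R ×ˢ prodSet (m + 1) R (δ / r)} ≤ ENNReal.ofReal (2 * R * V) := by
    intro i
    rw [volume_slice i _ (measurableSet_Icc.prod hmeas)]
    calc _ ≤ ∫⁻ t, (Icc (-R) R).indicator (fun _ => ENNReal.ofReal V) t := by
          apply lintegral_mono
          intro t
          by_cases ht : t ∈ Icc (-R) R
          · rw [indicator_of_mem ht]
            exact (measure_mono (fun y hy => hy.2)).trans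
              (volume_prodSet_le m ε R (δ / r) hε hε1 hR (by positivity))
          · rw [indicator_of_notMem ht]
            simp [ht]
      _ = _ := by
        rw [lintegral_indicator measurableSet_Icc, setLIntegral_const, Real.volume_Icc,
          ← ENNReal.ofReal_mul hV0]
        congr 1; ring
  refine (measure_mono hcov).trans ((measure_iUnion_fintype_le _ _).trans
    ((Finset.sum_le_sum fun i _ => hpiece i).trans (le_of_eq ?_)))
  rw [Finset.sum_const, Finset.card_univ, Fintype.card_fin, nsmul_eq_mul,
    show ((m : ℝ) + 2) = ((m + 2 : ℕ) : ℝ) by push_cast; ring,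
    ENNReal.ofReal_mul (Nat.cast_nonneg _), ENNReal.ofReal_natCast]

/-- The choice `ε = 1 / (1 + L)` in `volume_shell_le` turns the powers of `1 / ε` into powers of a
logarithm. In dimension `m + 2` only the `m`-th power of the logarithm appears. -/
theorem volume_shell_le_log (m : ℕ) (r R δ L : ℝ) (hr : 0 < r) (hrR : r ≤ R)
    (hδ : 0 < δ) (hL : 0 ≤ L) (hL' : Real.log (R ^ (m + 2) / δ) ≤ L) :
    volume {x : Fin (m + 2) → ℝ | r ≤ ‖x‖ ∧ ‖x‖ ≤ R ∧ ∏ i, |x i| < δ} ≤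
      ENNReal.ofReal ((m + 2) * 2 ^ (m + 2) * Real.exp 1 * (R / r) * (δ * (1 + L) ^ m)) := by
  have hR : 0 < R := hr.trans_le hrR
  have h1L : 0 < 1 + L := by positivity
  refine (volume_shell_le m (1 / (1 + L)) r R δ (by positivity)
    (by rw [div_le_one h1L]; linarith) hr hR hδ).trans (ENNReal.ofReal_le_ofReal ?_)
  set ε := 1 / (1 + L) with hε
  have hε0 : 0 < ε := by positivity
  have key : (r / δ) ^ ε * (R ^ ε) ^ (m + 1) ≤ Real.exp 1 := by
    calc (r / δ) ^ ε * (R ^ ε) ^ (m + 1) ≤ (R / δ) ^ ε * (R ^ ε) ^ (m + 1) := by gcongr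
      _ = (R ^ (m + 2) / δ) ^ ε := by
        rw [← Real.rpow_natCast (R ^ ε), ← Real.rpow_mul hR.le, mul_comm ε, Real.rpow_mul hR.le,
          ← Real.mul_rpow (by positivity) (by positivity), Real.rpow_natCast]
        congr 1
        rw [pow_succ R (m + 1)]; ring
      _ ≤ _ := by
        rw [Real.rpow_def_of_pos (by positivity)]
        apply Real.exp_le_exp.2
        calc _ ≤ L * ε := by gcongr
          _ ≤ 1 := by
            rw [hε, mul_one_div, div_le_one h1L]; linarith
  have e1 : (δ / r) ^ (1 - ε) = δ / r * (r / δ) ^ ε := by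
    rw [Real.rpow_sub (by positivity), Real.rpow_one, div_eq_mul_inv, ← Real.inv_rpow (by positivity),
      inv_div]
  have e2 : 1 / ε ^ m = (1 + L) ^ m := by
    rw [hε, one_div_pow, one_div_one_div]
  calc _ = (m + 2) * 2 ^ (m + 2) * ((r / δ) ^ ε * (R ^ ε) ^ (m + 1)) * (R / r) * (δ * (1 / ε ^ m)) := by
        rw [e1, pow_succ (2 : ℝ) (m + 1)]; field_simp
    _ ≤ _ := by
      rw [e2]
      gcongr

/-! ### Distribution of a random lattice point and overlap of balls -/

/-- The law of the random point `x(E) = b + ∑ l, p l • E_{·l}` has density at most a constant times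
`|p j| ^ (-D)`. The `j`-th column of `E` is translated by `-t` with `t ∈ [0, 1] ^ D`, which leaves
Lebesgue measure unchanged and keeps `E` in the enlarged box `Icc (u - 1) v`; averaging over `t` and
exchanging the integrals leaves the volume of `{t | x(E) + p j • t ∈ S}`. -/
theorem volume_point_mem_le {D n : ℕ} (b : Fin D → ℝ) (p : Fin n → ℝ) (j : Fin n) (hj : p j ≠ 0)
    (u v : Fin D → Fin n → ℝ) (S : Set (Fin D → ℝ)) (hS : MeasurableSet S) :
    volume {E : Fin D → Fin n → ℝ | E ∈ Icc u v ∧ (fun i => b i + ∑ l, p l * E i l) ∈ S} ≤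
      volume (Icc (u - 1) v) * (ENNReal.ofReal |(p j ^ D)⁻¹| * volume S) := by
  set X : (Fin D → Fin n → ℝ) → (Fin D → ℝ) := fun E i => b i + ∑ l, p l * E i l with hX
  have hXm : Measurable X := by fun_prop
  have hA : MeasurableSet {E : Fin D → Fin n → ℝ | E ∈ Icc u v ∧ X E ∈ S} :=
    measurableSet_Icc.inter (hXm hS)
  set A := {E : Fin D → Fin n → ℝ | E ∈ Icc u v ∧ X E ∈ S} with hAdef
  set τ : (Fin D → ℝ) → (Fin D → Fin n → ℝ) := fun t i l => if l = j then t i else 0 with hτ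
  have hXτ : ∀ E t, X (E + τ t) = X E + p j • t := by
    intro E t
    ext i
    simp only [X, τ, Pi.add_apply, mul_add, Finset.sum_add_distrib, mul_ite, mul_zero,
      Finset.sum_ite_eq', Finset.mem_univ, if_true, Pi.smul_apply, smul_eq_mul]
    ring
  have h1 : ∀ t ∈ Icc (0 : Fin D → ℝ) 1, volume A ≤
      ∫⁻ E in Icc (u - 1) v, S.indicator 1 (X E + p j • t) := by
    intro t ht
    rw [← measure_preimage_add_right volume (τ t) A, ← lintegral_indicator measurableSet_Icc,
      ← lintegral_indicator_one (hA.preimage (by fun_prop))]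
    apply lintegral_mono
    intro E
    by_cases hE : E ∈ (fun h => h + τ t) ⁻¹' A
    · obtain ⟨⟨h1, h2⟩, h3⟩ := hE
      have hE' : E ∈ Icc (u - 1) v := by
        constructor <;> intro i l
        · have a1 := h1 i l
          have a2 := ht.2 i
          simp only [τ, Pi.add_apply, Pi.sub_apply, Pi.one_apply] at a1 a2 ⊢
          split_ifs at a1 <;> linarith
        · have a1 := h2 i l
          have a2 := ht.1 i
          simp only [τ, Pi.add_apply, Pi.zero_apply] at a1 a2 ⊢
          split_ifs at a1 <;> linarith
      rw [indicator_of_mem hE', ← hXτ]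
      simp only
      rw [indicator_of_mem h3]
      exact indicator_le_self _ _ _
    · rw [indicator_of_notMem hE]
      exact zero_le
  have h2 : ∀ c : Fin D → ℝ, ∫⁻ t : Fin D → ℝ, S.indicator (1 : (Fin D → ℝ) → ENNReal) (c + p j • t) =
      ENNReal.ofReal |(p j ^ D)⁻¹| * volume S := by
    intro c
    have e := Measure.addHaar_preimage_smul (volume : Measure (Fin D → ℝ)) hj ((fun y => c + y) ⁻¹' S)
    rw [Module.finrank_fin_fun, measure_preimage_add] at e
    rw [← e, ← lintegral_indicator_one ((hS.preimage (by fun_prop)).preimage (by fun_prop))]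
    rfl
  have hvol : volume (Icc (0 : Fin D → ℝ) 1) = 1 := by
    rw [Real.volume_Icc_pi]; simp
  calc volume A = ∫⁻ t in Icc (0 : Fin D → ℝ) 1, volume A := by
        rw [setLIntegral_const, hvol, mul_one]
    _ ≤ ∫⁻ t in Icc (0 : Fin D → ℝ) 1, ∫⁻ E in Icc (u - 1) v, S.indicator 1 (X E + p j • t) :=
        setLIntegral_mono' measurableSet_Icc h1
    _ = ∫⁻ E in Icc (u - 1) v, ∫⁻ t in Icc (0 : Fin D → ℝ) 1, S.indicator 1 (X E + p j • t) := by
        apply lintegral_lintegral_swap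
        apply Measurable.aemeasurable
        exact (measurable_one.indicator hS).comp (by fun_prop)
    _ ≤ ∫⁻ E in Icc (u - 1) v, ∫⁻ t : Fin D → ℝ, S.indicator 1 (X E + p j • t) :=
        lintegral_mono fun E => setLIntegral_le_lintegral _ _
    _ = _ := by
        simp only [h2]
        rw [setLIntegral_const, mul_comm]

/-- Balls centred at the points `w.1 • e₁ + w.2 • e₂` of a planar lattice overlap boundedly often. -/
theorem tsum_volume_inter_ball_le {D : ℕ} (e₁ e₂ : Fin D → ℝ) (c ρ : ℝ) (hc : 0 < c) (hρ : 0 ≤ ρ)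
    (hlow : ∀ a b : ℝ, c * |a| ≤ ‖a • e₁ + b • e₂‖ ∧ c * |b| ≤ ‖a • e₁ + b • e₂‖)
    (B : Set (Fin D → ℝ)) :
    ∑' w : ℤ × ℤ, volume (B ∩ Metric.closedBall ((w.1 : ℝ) • e₁ + (w.2 : ℝ) • e₂) ρ) ≤
      ENNReal.ofReal ((4 * ρ / c + 1) ^ 2) * volume B := by
  have h1 : ∀ w : ℤ × ℤ, volume (B ∩ Metric.closedBall ((w.1 : ℝ) • e₁ + (w.2 : ℝ) • e₂) ρ) =
      ∫⁻ x in B, (Metric.closedBall ((w.1 : ℝ) • e₁ + (w.2 : ℝ) • e₂) ρ).indicator 1 x := by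
    intro w
    rw [lintegral_indicator_one Metric.isClosed_closedBall.measurableSet, inter_comm,
      Measure.restrict_apply Metric.isClosed_closedBall.measurableSet]
  simp only [h1]
  rw [← lintegral_tsum (fun w => (measurable_one.indicator
    Metric.isClosed_closedBall.measurableSet).aemeasurable), ← setLIntegral_const]
  refine lintegral_mono fun x => ?_
  by_cases hne : ∃ w₀ : ℤ × ℤ, x ∈ Metric.closedBall ((w₀.1 : ℝ) • e₁ + (w₀.2 : ℝ) • e₂) ρ
  · obtain ⟨w₀, hw₀⟩ := hne
    set N : ℕ := ⌊2 * ρ / c⌋₊ with hN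
    set F : Finset (ℤ × ℤ) := Finset.Icc (w₀.1 - N) (w₀.1 + N) ×ˢ Finset.Icc (w₀.2 - N) (w₀.2 + N)
    have hF : ∀ w : ℤ × ℤ, x ∈ Metric.closedBall ((w.1 : ℝ) • e₁ + (w.2 : ℝ) • e₂) ρ → w ∈ F := by
      intro w hw
      have hd : ‖((w.1 - w₀.1 : ℤ) : ℝ) • e₁ + ((w.2 - w₀.2 : ℤ) : ℝ) • e₂‖ ≤ 2 * ρ := by
        have := dist_triangle_left ((w.1 : ℝ) • e₁ + (w.2 : ℝ) • e₂)
          ((w₀.1 : ℝ) • e₁ + (w₀.2 : ℝ) • e₂) x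
        rw [Metric.mem_closedBall] at hw hw₀
        rw [dist_eq_norm] at this
        have e : ((w.1 - w₀.1 : ℤ) : ℝ) • e₁ + ((w.2 - w₀.2 : ℤ) : ℝ) • e₂ =
          ((w.1 : ℝ) • e₁ + (w.2 : ℝ) • e₂) - ((w₀.1 : ℝ) • e₁ + (w₀.2 : ℝ) • e₂) := by
          push_cast; module
        rw [e]
        linarith
      have key : ∀ k : ℤ, c * |(k : ℝ)| ≤ 2 * ρ → |k| ≤ (N : ℤ) := by
        intro k hk
        have : |(k : ℝ)| ≤ 2 * ρ / c := by rw [le_div_iff₀ hc]; linarith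
        have h2 : (k.natAbs : ℝ) ≤ 2 * ρ / c := by rwa [Nat.cast_natAbs, Int.cast_abs]
        have h3 := Nat.le_floor h2
        rw [← hN] at h3
        rw [Int.abs_eq_natAbs]
        exact_mod_cast h3
      have a1 := abs_le.1 (key _ ((hlow _ _).1.trans hd))
      have a2 := abs_le.1 (key _ ((hlow _ _).2.trans hd))
      simp only [F, Finset.mem_product, Finset.mem_Icc]
      omega
    rw [tsum_eq_sum (s := F) (fun w hw => indicator_of_notMem (fun h => hw (hF w h)) _)]
    calc _ ≤ ∑ w ∈ F, (1 : ENNReal) := Finset.sum_le_sum fun w _ =>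
          indicator_le_self _ (1 : (Fin D → ℝ) → ENNReal) x
      _ = ((2 * N + 1) ^ 2 : ℕ) := by
        rw [Finset.sum_const, nsmul_one]
        congr 1
        simp only [F, Finset.card_product, Int.card_Icc]
        rw [sq]
        congr 1 <;> lia
      _ ≤ _ := by
        rw [← ENNReal.ofReal_natCast]
        apply ENNReal.ofReal_le_ofReal
        have : (N : ℝ) ≤ 2 * ρ / c := Nat.floor_le (by positivity)
        push_cast
        refine pow_le_pow_left₀ (by positivity) ?_ 2
        have e : 4 * ρ / c = 2 * (2 * ρ / c) := by ring
        linarith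
  · push Not at hne
    rw [ENNReal.tsum_eq_zero.2 (fun w => indicator_of_notMem (hne w) _)]
    exact zero_le

/-! ### Summation over the coordinates of the lattice points -/

/-- For `E` in the box, the lattice point lies within `O(Q)` of `w.1 • e₁ + w.2 • e₂`, so the density
bound is only needed on `B ∩ closedBall _ ρ`. These pieces overlap `O(Q ^ 2)` times, and the factor
`Q ^ (-(n + 2))` of the density becomes `Q ^ (-n)`. -/
theorem tsum_volume_point_mem_le {n : ℕ} (e₁ e₂ : Fin (n + 2) → ℝ) (u v : Fin (n + 2) → Fin n → ℝ)
    (c M : ℝ) (hc : 0 < c) (hM0 : 0 ≤ M)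
    (hM : ∀ E ∈ Icc u v, ∀ i l, |E i l| ≤ M)
    (hlow : ∀ a b : ℝ, c * |a| ≤ ‖a • e₁ + b • e₂‖ ∧ c * |b| ≤ ‖a • e₁ + b • e₂‖)
    (B : Set (Fin (n + 2) → ℝ)) (hB : MeasurableSet B) (Q : ℝ) (hQ : 1 ≤ Q) (p : Fin n → ℤ)
    (j : Fin n) (hj : Q ≤ |(p j : ℝ)|) (hp : ∀ l, |(p l : ℝ)| ≤ 2 * Q) :
    ∑' w : ℤ × ℤ, volume {E : Fin (n + 2) → Fin n → ℝ | E ∈ Icc u v ∧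
        (fun i => ((w.1 : ℝ) • e₁ + (w.2 : ℝ) • e₂) i + ∑ l, (p l : ℝ) * E i l) ∈ B} ≤
      volume (Icc (u - 1) v) * (ENNReal.ofReal ((8 * n * M / c + 1) ^ 2 / Q ^ n) * volume B) := by
  have hQ0 : 0 < Q := by linarith
  have hpj : (p j : ℝ) ≠ 0 := abs_pos.1 (hQ0.trans_le hj)
  set ρ := n * (2 * Q * M) with hρ
  have hρ0 : 0 ≤ ρ := by positivity
  have h1 : ∀ w : ℤ × ℤ, volume {E : Fin (n + 2) → Fin n → ℝ | E ∈ Icc u v ∧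
        (fun i => ((w.1 : ℝ) • e₁ + (w.2 : ℝ) • e₂) i + ∑ l, (p l : ℝ) * E i l) ∈ B} ≤
      volume (Icc (u - 1) v) * (ENNReal.ofReal (1 / Q ^ (n + 2)) *
        volume (B ∩ Metric.closedBall ((w.1 : ℝ) • e₁ + (w.2 : ℝ) • e₂) ρ)) := by
    intro w
    refine (measure_mono ?_).trans ((volume_point_mem_le ((w.1 : ℝ) • e₁ + (w.2 : ℝ) • e₂)
      (fun l => (p l : ℝ)) j hpj u v
      (B ∩ Metric.closedBall ((w.1 : ℝ) • e₁ + (w.2 : ℝ) • e₂) ρ)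
      (hB.inter Metric.isClosed_closedBall.measurableSet)).trans ?_)
    · rintro E ⟨hE, hx⟩
      refine ⟨hE, hx, ?_⟩
      rw [Metric.mem_closedBall, dist_eq_norm, pi_norm_le_iff_of_nonneg hρ0]
      intro i
      rw [Pi.sub_apply, add_sub_cancel_left]
      calc ‖∑ l, (p l : ℝ) * E i l‖ ≤ ∑ l : Fin n, ‖(p l : ℝ) * E i l‖ := norm_sum_le _ _
        _ ≤ ∑ l : Fin n, 2 * Q * M := by
          refine Finset.sum_le_sum fun l _ => ?_
          rw [norm_mul]
          exact mul_le_mul (hp l) (hM E hE i l) (norm_nonneg _) (by positivity)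
        _ = ρ := by simp [hρ]
    · gcongr
      rw [abs_inv, abs_pow, one_div]
      gcongr
  refine (ENNReal.tsum_le_tsum h1).trans ?_
  rw [ENNReal.tsum_mul_left, ENNReal.tsum_mul_left]
  refine mul_le_mul_right ?_ _
  refine (mul_le_mul_right (tsum_volume_inter_ball_le e₁ e₂ c ρ hc hρ0 hlow B) _).trans ?_
  rw [← mul_assoc, ← ENNReal.ofReal_mul (by positivity)]
  gcongr
  have : 4 * ρ / c + 1 ≤ (8 * n * M / c + 1) * Q := by
    rw [hρ, add_mul, one_mul]
    refine add_le_add (le_of_eq ?_) hQ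
    ring
  calc 1 / Q ^ (n + 2) * (4 * ρ / c + 1) ^ 2 ≤ 1 / Q ^ (n + 2) * ((8 * n * M / c + 1) * Q) ^ 2 := by
        gcongr
    _ = _ := by rw [pow_add]; field_simp

/-- Integer vectors whose maximum norm lies in `[2 ^ k, 2 ^ (k + 1))`. -/
def dyadicVecs (n k : ℕ) : Finset (Fin n → ℤ) :=
  open Classical in
  {p ∈ Fintype.piFinset fun _ : Fin n => Finset.Ioo (-2 ^ (k + 1) : ℤ) (2 ^ (k + 1)) |
    ∃ j, (2 : ℤ) ^ k ≤ |p j|}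

theorem card_dyadicVecs_le (n k : ℕ) : (dyadicVecs n k).card ≤ (4 * 2 ^ k) ^ n := by
  classical
  refine (Finset.card_filter_le _ _).trans ?_
  rw [Fintype.card_piFinset_const, Int.card_Ioo]
  gcongr
  have : (2 : ℤ) ^ (k + 1) = ((2 ^ (k + 1) : ℕ) : ℤ) := by push_cast; rfl
  rw [this, pow_succ]
  lia

/-- The measure of the parameters for which some lattice point with `p ≠ 0` and `|p| < 2 ^ (ν + 1)`
lies in `B` is bounded by the volume of `B` up to a factor `ν + 1`, the number of dyadic scales
for `p`. -/
theorem volume_exists_mem_le {n : ℕ} (e₁ e₂ : Fin (n + 2) → ℝ) (u v : Fin (n + 2) → Fin n → ℝ)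
    (c M : ℝ) (hc : 0 < c) (hM0 : 0 ≤ M)
    (hM : ∀ E ∈ Icc u v, ∀ i l, |E i l| ≤ M)
    (hlow : ∀ a b : ℝ, c * |a| ≤ ‖a • e₁ + b • e₂‖ ∧ c * |b| ≤ ‖a • e₁ + b • e₂‖)
    (B : Set (Fin (n + 2) → ℝ)) (hB : MeasurableSet B) (ν : ℕ) :
    volume {E : Fin (n + 2) → Fin n → ℝ | E ∈ Icc u v ∧ ∃ (w : ℤ × ℤ) (p : Fin n → ℤ), p ≠ 0 ∧
        (∀ l, |p l| < 2 ^ (ν + 1)) ∧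
        (fun i => ((w.1 : ℝ) • e₁ + (w.2 : ℝ) • e₂) i + ∑ l, (p l : ℝ) * E i l) ∈ B} ≤
      ENNReal.ofReal ((ν + 1) * 4 ^ n * (8 * n * M / c + 1) ^ 2) *
        (volume (Icc (u - 1) v) * volume B) := by
  have hsub : {E : Fin (n + 2) → Fin n → ℝ | E ∈ Icc u v ∧ ∃ (w : ℤ × ℤ) (p : Fin n → ℤ), p ≠ 0 ∧
        (∀ l, |p l| < 2 ^ (ν + 1)) ∧
        (fun i => ((w.1 : ℝ) • e₁ + (w.2 : ℝ) • e₂) i + ∑ l, (p l : ℝ) * E i l) ∈ B} ⊆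
      ⋃ k ∈ Finset.range (ν + 1), ⋃ p ∈ dyadicVecs n k, ⋃ w : ℤ × ℤ,
        {E : Fin (n + 2) → Fin n → ℝ | E ∈ Icc u v ∧
          (fun i => ((w.1 : ℝ) • e₁ + (w.2 : ℝ) • e₂) i + ∑ l, (p l : ℝ) * E i l) ∈ B} := by
    rintro E ⟨hE, w, p, hp0, hp, hx⟩
    obtain ⟨l₀, hl₀⟩ : ∃ l, p l ≠ 0 := by
      by_contra! h
      exact hp0 (funext h)
    have : Nonempty (Fin n) := ⟨l₀⟩
    obtain ⟨j, hj⟩ := Finite.exists_max fun l => (p l).natAbs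
    have hj0 : (p j).natAbs ≠ 0 := by
      have := hj l₀
      omega
    have hlo := Nat.pow_log_le_self 2 hj0
    have hhi := Nat.lt_pow_succ_log_self (b := 2) one_lt_two (p j).natAbs
    set k := Nat.log 2 (p j).natAbs
    have hlo' : (2 : ℤ) ^ k ≤ |p j| := by rw [Int.abs_eq_natAbs]; exact_mod_cast hlo
    have hhi' : ∀ l, |p l| < (2 : ℤ) ^ (k + 1) := by
      intro l
      rw [Int.abs_eq_natAbs]
      exact_mod_cast (hj l).trans_lt hhi
    have hk : k < ν + 1 := by
      have := hlo'.trans_lt (hp j)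
      exact (pow_lt_pow_iff_right₀ (by norm_num : (1 : ℤ) < 2)).1 this
    simp only [mem_iUnion]
    refine ⟨k, Finset.mem_range.2 hk, p, ?_, w, hE, hx⟩
    simp only [dyadicVecs, Finset.mem_filter, Fintype.mem_piFinset, Finset.mem_Ioo]
    exact ⟨fun l => abs_lt.1 (hhi' l), j, hlo'⟩
  refine (measure_mono hsub).trans ((measure_biUnion_finset_le _ _).trans ?_)
  have hk : ∀ k ∈ Finset.range (ν + 1), volume (⋃ p ∈ dyadicVecs n k, ⋃ w : ℤ × ℤ,
        {E : Fin (n + 2) → Fin n → ℝ | E ∈ Icc u v ∧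
          (fun i => ((w.1 : ℝ) • e₁ + (w.2 : ℝ) • e₂) i + ∑ l, (p l : ℝ) * E i l) ∈ B}) ≤
      ENNReal.ofReal (4 ^ n * (8 * n * M / c + 1) ^ 2) *
        (volume (Icc (u - 1) v) * volume B) := by
    intro k _
    have hp : ∀ p ∈ dyadicVecs n k, volume (⋃ w : ℤ × ℤ,
        {E : Fin (n + 2) → Fin n → ℝ | E ∈ Icc u v ∧
          (fun i => ((w.1 : ℝ) • e₁ + (w.2 : ℝ) • e₂) i + ∑ l, (p l : ℝ) * E i l) ∈ B}) ≤
        volume (Icc (u - 1) v) *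
          (ENNReal.ofReal ((8 * n * M / c + 1) ^ 2 / ((2 : ℝ) ^ k) ^ n) * volume B) := by
      intro p hp
      simp only [dyadicVecs, Finset.mem_filter, Fintype.mem_piFinset, Finset.mem_Ioo] at hp
      obtain ⟨h1, j, h2⟩ := hp
      refine (measure_iUnion_le _).trans (tsum_volume_point_mem_le e₁ e₂ u v c M hc hM0 hM hlow B hB
        (2 ^ k) (one_le_pow₀ one_le_two) p j (by exact_mod_cast h2) fun l => ?_)
      have := (abs_lt.2 (h1 l)).le
      rw [pow_succ, mul_comm] at this
      exact_mod_cast this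
    refine (measure_biUnion_finset_le _ _).trans ((Finset.sum_le_sum hp).trans ?_)
    set V := volume (Icc (u - 1) v)
    set s := (8 * n * M / c + 1) ^ 2
    have e : ((dyadicVecs n k).card : ENNReal) *
        (V * (ENNReal.ofReal (s / ((2 : ℝ) ^ k) ^ n) * volume B)) =
        ENNReal.ofReal ((dyadicVecs n k).card * (s / ((2 : ℝ) ^ k) ^ n)) * (V * volume B) := by
      rw [ENNReal.ofReal_mul (Nat.cast_nonneg _), ENNReal.ofReal_natCast]
      ring
    rw [Finset.sum_const, nsmul_eq_mul, e]
    refine mul_le_mul_left (ENNReal.ofReal_le_ofReal ?_) _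
    have : ((dyadicVecs n k).card : ℝ) ≤ (4 * 2 ^ k) ^ n := by exact_mod_cast card_dyadicVecs_le n k
    calc _ ≤ (4 * 2 ^ k : ℝ) ^ n * (s / ((2 : ℝ) ^ k) ^ n) := by gcongr
      _ = _ := by rw [mul_pow]; field_simp
  refine (Finset.sum_le_sum hk).trans (le_of_eq ?_)
  rw [Finset.sum_const, nsmul_eq_mul, ← mul_assoc, Finset.card_range, ← ENNReal.ofReal_natCast,
      ← ENNReal.ofReal_mul (Nat.cast_nonneg _)]
  congr 2
  push_cast; ring

/-- Compactness of `Ω` and invertibility make the norms of coordinate vectors and of lattice points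
comparable uniformly on `Ω`. -/
theorem exists_norm_bounds {α : Type*} [TopologicalSpace α] {D : ℕ} (hD : 0 < D) (Ω : Set α)
    (hΩ : IsCompact Ω) (g : α → Fin D → Fin D → ℝ) (hg : Continuous g)
    (hdet : ∀ E ∈ Ω, (Matrix.of fun i k => g E k i).det ≠ 0) :
    ∃ c C : ℝ, 0 < c ∧ c ≤ C ∧ ∀ E ∈ Ω, ∀ y : Fin D → ℝ,
      c * ‖y‖ ≤ ‖∑ j, y j • g E j‖ ∧ ‖∑ j, y j • g E j‖ ≤ C * ‖y‖ := by
  have : Nonempty (Fin D) := ⟨⟨0, hD⟩⟩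
  rcases Ω.eq_empty_or_nonempty with rfl | hne
  · exact ⟨1, 1, one_pos, le_rfl, by simp⟩
  have hcpt : IsCompact (Ω ×ˢ Metric.sphere (0 : Fin D → ℝ) 1) := hΩ.prod (isCompact_sphere _ _)
  have hne' : (Ω ×ˢ Metric.sphere (0 : Fin D → ℝ) 1).Nonempty :=
    hne.prod (NormedSpace.sphere_nonempty.2 zero_le_one)
  set f : α × (Fin D → ℝ) → ℝ := fun q => ‖∑ j, q.2 j • g q.1 j‖ with hf
  have hfc : Continuous f := by fun_prop
  obtain ⟨q₁, hq₁, hmin⟩ := hcpt.exists_isMinOn hne' hfc.continuousOn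
  obtain ⟨q₂, hq₂, hmax⟩ := hcpt.exists_isMaxOn hne' hfc.continuousOn
  have hpos : 0 < f q₁ := by
    rw [hf, norm_pos_iff]
    intro h0
    have : q₁.2 = 0 := by
      apply Matrix.eq_zero_of_mulVec_eq_zero (hdet q₁.1 hq₁.1)
      rw [← h0]
      ext i
      simp [Matrix.mulVec, dotProduct, mul_comm]
    have h1 := hq₁.2
    rw [mem_sphere_zero_iff_norm, this] at h1
    simp at h1
  refine ⟨f q₁, f q₂, hpos, hmin hq₂, fun E hE y => ?_⟩
  rcases eq_or_ne y 0 with rfl | hy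
  · simp
  have hy' : 0 < ‖y‖ := norm_pos_iff.2 hy
  have hmem : (E, ‖y‖⁻¹ • y) ∈ Ω ×ˢ Metric.sphere (0 : Fin D → ℝ) 1 := by
    refine ⟨hE, ?_⟩
    rw [mem_sphere_zero_iff_norm, norm_smul, norm_inv, norm_norm, inv_mul_cancel₀ hy'.ne']
  have hval : f (E, ‖y‖⁻¹ • y) * ‖y‖ = ‖∑ j, y j • g E j‖ := by
    simp only [f, Pi.smul_apply, smul_eq_mul, mul_smul, ← Finset.smul_sum]
    rw [norm_smul, norm_inv, norm_norm]
    field_simp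
  have h1 : f q₁ ≤ f (E, ‖y‖⁻¹ • y) := hmin hmem
  have h2 : f (E, ‖y‖⁻¹ • y) ≤ f q₂ := hmax hmem
  rw [← hval]
  constructor <;> gcongr

/-! ### Borel–Cantelli argument -/

/-- The lattice point with (real) coordinates `y` in the basis `e₁, e₂, E_{·1}, …, E_{·n}`. -/
def latticePt {n : ℕ} (e₁ e₂ : Fin (n + 2) → ℝ) (E : Fin (n + 2) → Fin n → ℝ)
    (y : Fin (n + 2) → ℝ) : Fin (n + 2) → ℝ :=
  fun i => (y 0 • e₁ + y 1 • e₂) i + ∑ l : Fin n, y l.succ.succ * E i l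

theorem ae_prod_ne_zero {n : ℕ} (e₁ e₂ : Fin (n + 2) → ℝ) (u v : Fin (n + 2) → Fin n → ℝ) :
    ∀ᵐ E : Fin (n + 2) → Fin n → ℝ, ∀ z : Fin (n + 2) → ℤ, (∃ l : Fin n, z l.succ.succ ≠ 0) →
      E ∈ Icc u v → ∏ i, |latticePt e₁ e₂ E (fun j => (z j : ℝ)) i| ≠ 0 := by
  rw [ae_all_iff]
  intro z
  by_cases hz : ∃ l : Fin n, z l.succ.succ ≠ 0
  · obtain ⟨l, hl⟩ := hz
    have hSm : MeasurableSet {x : Fin (n + 2) → ℝ | ∏ i, |x i| = 0} :=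
      measurableSet_eq_fun (by fun_prop) measurable_const
    have hS0 : volume {x : Fin (n + 2) → ℝ | ∏ i, |x i| = 0} = 0 := by
      have e : {x : Fin (n + 2) → ℝ | ∏ i, |x i| = 0} = ⋃ i, {x | x i = 0} := by
        ext x
        simp [Finset.prod_eq_zero_iff]
      rw [e, measure_iUnion_null_iff]
      exact fun i => Measure.pi_hyperplane _ i 0
    have h := volume_point_mem_le ((z 0 : ℝ) • e₁ + (z 1 : ℝ) • e₂)
      (fun l : Fin n => (z l.succ.succ : ℝ)) l (by exact_mod_cast hl) u v _ hSm
    rw [hS0, mul_zero, mul_zero, nonpos_iff_eq_zero] at h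
    filter_upwards [compl_mem_ae_iff.2 h] with E hE _ hEΩ h0
    exact hE ⟨hEΩ, h0⟩
  · exact Eventually.of_forall fun E h => absurd h hz

/-- The real inequality behind the convergence of the sum over the dyadic shells. -/
theorem shell_sum_bound (n : ℕ) (ν a ℓ δ L : ℝ) (hν : 1 ≤ ν) (ha : 0 ≤ a) (hℓ : 0 ≤ ℓ) (hδ : 0 ≤ δ)
    (hL0 : 0 ≤ L) (hL : L = a + (n + 2) * ν + ℓ) :
    (ν + 1) * (δ * (1 + L) ^ n) ≤
      2 * (1 + a + (n + 2)) ^ n * 2 ^ (n - 1) * (ν ^ (n + 1) * δ + ν * ℓ ^ n * δ) := by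
  have h1 : 1 + L ≤ (1 + a + (n + 2)) * (ν + ℓ) := by
    rw [hL]
    have : (0 : ℝ) ≤ n := Nat.cast_nonneg n
    nlinarith [mul_nonneg this hℓ, mul_nonneg ha hℓ, mul_nonneg ha (sub_nonneg.2 hν)]
  have h2 : (ν + ℓ) ^ n ≤ 2 ^ (n - 1) * (ν ^ n + ℓ ^ n) := add_pow_le (by linarith) hℓ n
  have hν0 : 0 ≤ ν := by linarith
  calc (ν + 1) * (δ * (1 + L) ^ n) ≤ (2 * ν) * (δ * ((1 + a + (n + 2)) * (ν + ℓ)) ^ n) := by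
        gcongr; linarith
    _ = 2 * ν * δ * (1 + a + (n + 2)) ^ n * (ν + ℓ) ^ n := by rw [mul_pow]; ring
    _ ≤ 2 * ν * δ * (1 + a + (n + 2)) ^ n * (2 ^ (n - 1) * (ν ^ n + ℓ ^ n)) := by gcongr
    _ = _ := by rw [pow_succ ν n]; ring

/-- The lower bound in terms of `latticePt`: the Borel–Cantelli argument over the dyadic shells
`2 ^ ν ≤ |z| < 2 ^ (ν + 1)`. -/
theorem ae_exists_lower_bound {n : ℕ} (e₁ e₂ : Fin (n + 2) → ℝ) (u v : Fin (n + 2) → Fin n → ℝ)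
    (hne : (Icc u v).Nonempty)
    (c C K : ℝ) (hc : 0 < c) (hcC : c ≤ C) (hK1 : 1 ≤ K) (hKc : 1 / c ≤ K)
    (hb : ∀ E ∈ Icc u v, ∀ y : Fin (n + 2) → ℝ,
      c * ‖y‖ ≤ ‖latticePt e₁ e₂ E y‖ ∧ ‖latticePt e₁ e₂ E y‖ ≤ C * ‖y‖)
    (φ : ℝ → ℝ) (hφ : ∀ t, 0 < t → 0 < φ t) (hanti : AntitoneOn φ (Ioi 0))
    (hlim : Tendsto φ atTop (nhds 0))
    (hs1 : Summable fun ν : ℕ => (ν : ℝ) ^ (n + 1) * φ ((2 : ℝ) ^ ν / K))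
    (hs2 : Summable fun ν : ℕ =>
        (ν : ℝ) * (Real.log (1 / φ (K * (2 : ℝ) ^ ν))) ^ n * φ ((2 : ℝ) ^ ν / K)) :
    ∀ᵐ E : Fin (n + 2) → Fin n → ℝ, E ∈ Icc u v →
      ∃ η : ℝ, 0 < η ∧ ∀ z : Fin (n + 2) → ℤ, (∃ l : Fin n, z l.succ.succ ≠ 0) →
        η * φ ‖latticePt e₁ e₂ E (fun j => (z j : ℝ))‖ ≤
          ∏ i, |latticePt e₁ e₂ E (fun j => (z j : ℝ)) i| := by
  have hK0 : 0 < K := by linarith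
  have hC0 : 0 < C := by linarith
  set M := max ‖u‖ ‖v‖ with hMdef
  have hM0 : 0 ≤ M := (norm_nonneg u).trans (le_max_left _ _)
  have hM : ∀ E ∈ Icc u v, ∀ i l, |E i l| ≤ M := by
    intro E hE i l
    refine (abs_le_max_abs_abs (hE.1 i l) (hE.2 i l)).trans (max_le_max ?_ ?_)
    · exact (norm_le_pi_norm (u i) l).trans (norm_le_pi_norm u i)
    · exact (norm_le_pi_norm (v i) l).trans (norm_le_pi_norm v i)
  have hlow : ∀ a b : ℝ, c * |a| ≤ ‖a • e₁ + b • e₂‖ ∧ c * |b| ≤ ‖a • e₁ + b • e₂‖ := by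
    -- At the vector `(a, b, 0, …, 0)` the lattice point in `hb` does not depend on `E`.
    obtain ⟨E, hE⟩ := hne
    intro a b
    set y : Fin (n + 2) → ℝ := Fin.cons a (Fin.cons b 0) with hy
    have h := (hb E hE y).1
    have e : latticePt e₁ e₂ E y = a • e₁ + b • e₂ := by
      ext i
      simp only [latticePt, y, Fin.cons_zero, Fin.cons_succ, ← Fin.succ_zero_eq_one]
      simp
    rw [e] at h
    constructor
    · refine le_trans ?_ h
      gcongr
      exact norm_le_pi_norm y 0
    · refine le_trans ?_ h
      gcongr
      exact norm_le_pi_norm y 1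
  set δ : ℕ → ℝ := fun ν => φ ((2 : ℝ) ^ ν / K) with hδdef
  set ℓ : ℕ → ℝ := fun ν => Real.log (1 / φ (K * (2 : ℝ) ^ ν)) with hℓdef
  have hδ0 : ∀ ν, 0 < δ ν := fun ν => hφ _ (by positivity)
  set B : ℕ → Set (Fin (n + 2) → ℝ) := fun ν =>
    {x | c * 2 ^ ν ≤ ‖x‖ ∧ ‖x‖ ≤ C * 2 ^ (ν + 1) ∧ ∏ i, |x i| < δ ν} with hBdef
  have hBm : ∀ ν, MeasurableSet (B ν) := fun ν =>
    (measurableSet_le measurable_const measurable_norm).inter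
      ((measurableSet_le measurable_norm measurable_const).inter
        (measurableSet_lt (f := fun x : Fin (n + 2) → ℝ => ∏ i, |x i|) (by fun_prop)
          measurable_const))
  -- Exceptional parameters of level `ν`; only the size of `p` has to be recorded, since membership in
  -- `B ν` already controls `w`.
  set s : ℕ → Set (Fin (n + 2) → Fin n → ℝ) := fun ν =>
    {E | E ∈ Icc u v ∧ ∃ (w : ℤ × ℤ) (p : Fin n → ℤ), p ≠ 0 ∧ (∀ l, |p l| < 2 ^ (ν + 1)) ∧
        (fun i => ((w.1 : ℝ) • e₁ + (w.2 : ℝ) • e₂) i + ∑ l, (p l : ℝ) * E i l) ∈ B ν} with hsdef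
  set V := volume (Icc (u - 1) v) with hVdef
  have hV : V ≠ ⊤ := isCompact_Icc.measure_lt_top.ne
  set a := (n + 2) * |Real.log (2 * C)| with hadef
  have ha : 0 ≤ a := by positivity
  set A₀ : ℝ := 2 * (1 + a + (n + 2)) ^ n * 2 ^ (n - 1) with hA₀
  set A : ℝ := 4 ^ n * (8 * n * M / c + 1) ^ 2 * V.toReal *
    ((n + 2) * 2 ^ (n + 2) * Real.exp 1 * (2 * C / c)) with hA
  have hbound : ∀ᶠ ν : ℕ in atTop, volume (s ν) ≤
      ENNReal.ofReal (A * (A₀ * ((ν : ℝ) ^ (n + 1) * δ ν + ν * ℓ ν ^ n * δ ν))) := by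
    have hδlim : Tendsto δ atTop (nhds 0) :=
      hlim.comp ((tendsto_pow_atTop_atTop_of_one_lt one_lt_two).atTop_div_const hK0)
    filter_upwards [eventually_ge_atTop 1, hδlim.eventually_le_const one_pos] with ν hν1 hδ1
    have hν : (1 : ℝ) ≤ ν := by exact_mod_cast hν1
    have hφle : φ (K * 2 ^ ν) ≤ δ ν := by
      apply hanti (by simp only [mem_Ioi]; positivity) (by simp only [mem_Ioi]; positivity)
      calc (2 : ℝ) ^ ν / K ≤ 2 ^ ν := div_le_self (by positivity) hK1
        _ ≤ K * 2 ^ ν := le_mul_of_one_le_left (by positivity) hK1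
    have hlogδ : Real.log (1 / δ ν) ≤ ℓ ν := by
      have := hφ (K * 2 ^ ν) (by positivity)
      apply Real.log_le_log (by have := hδ0 ν; positivity)
      gcongr
    have hlogδ0 : 0 ≤ Real.log (1 / δ ν) := by
      apply Real.log_nonneg
      rw [le_div_iff₀ (hδ0 ν)]
      linarith
    have hℓ0 : 0 ≤ ℓ ν := hlogδ0.trans hlogδ
    set L := a + (n + 2) * ν + ℓ ν with hL
    have hL0 : 0 ≤ L := by positivity
    have hlogR : Real.log ((C * 2 ^ (ν + 1)) ^ (n + 2) / δ ν) ≤ L := by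
      have h2 : Real.log 2 ≤ 1 := by have := Real.log_two_lt_d9; linarith
      have e : Real.log ((C * 2 ^ (ν + 1)) ^ (n + 2) / δ ν) =
          (n + 2) * (Real.log (2 * C) + ν * Real.log 2) + Real.log (1 / δ ν) := by
        rw [div_eq_mul_one_div, Real.log_mul (by positivity) (by have := hδ0 ν; positivity),
          Real.log_pow, show C * 2 ^ (ν + 1) = 2 * C * 2 ^ ν by ring,
          Real.log_mul (by positivity) (by positivity), Real.log_pow]
        push_cast; ring
      rw [e, hL, hadef, ← mul_add]
      gcongr
      · exact le_abs_self _
      · exact mul_le_of_le_one_right (by positivity) h2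
    have hshell := volume_shell_le_log n (c * 2 ^ ν) (C * 2 ^ (ν + 1)) (δ ν) L (by positivity)
      (by gcongr <;> simp) (hδ0 ν) hL0 hlogR
    calc volume (s ν) ≤ _ := volume_exists_mem_le e₁ e₂ u v c M hc hM0 hM hlow (B ν) (hBm ν) ν
      _ ≤ ENNReal.ofReal ((ν + 1) * 4 ^ n * (8 * n * M / c + 1) ^ 2) * (V * ENNReal.ofReal
          ((n + 2) * 2 ^ (n + 2) * Real.exp 1 * (C * 2 ^ (ν + 1) / (c * 2 ^ ν)) *
            (δ ν * (1 + L) ^ n))) := by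
        gcongr
      _ = ENNReal.ofReal (A * ((ν + 1) * (δ ν * (1 + L) ^ n))) := by
        rw [← ENNReal.ofReal_toReal hV, ← ENNReal.ofReal_mul ENNReal.toReal_nonneg,
          ← ENNReal.ofReal_mul (by positivity)]
        congr 1
        rw [hA, show C * 2 ^ (ν + 1) / (c * 2 ^ ν) = 2 * C / c by rw [pow_succ]; field_simp]
        ring
      _ ≤ _ := by
        apply ENNReal.ofReal_le_ofReal
        refine mul_le_mul_of_nonneg_left ?_ (by positivity)
        exact shell_sum_bound n ν a (ℓ ν) (δ ν) L hν ha hℓ0 (hδ0 ν).le hL0 hL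
  obtain ⟨N₀, hN₀⟩ := eventually_atTop.1 hbound
  have hsum : ∑' ν, volume (s (ν + N₀)) ≠ ⊤ := by
    have hS : Summable fun ν : ℕ => A * (A₀ * ((ν : ℝ) ^ (n + 1) * δ ν + ν * ℓ ν ^ n * δ ν)) :=
      ((hs1.add hs2).mul_left A₀).mul_left A
    have hS' := (summable_nat_add_iff N₀).2 hS
    exact ne_top_of_le_ne_top hS'.tsum_ofReal_ne_top
      (ENNReal.tsum_le_tsum fun ν => hN₀ (ν + N₀) (Nat.le_add_left _ _))
  filter_upwards [ae_eventually_notMem hsum, ae_prod_ne_zero e₁ e₂ u v] with E hE hE0 hEΩ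
  obtain ⟨N₁, hN₁⟩ := eventually_atTop.1 hE
  set X : (Fin (n + 2) → ℤ) → Fin (n + 2) → ℝ := fun z => latticePt e₁ e₂ E (fun j => (z j : ℝ))
    with hX
  have hXpos : ∀ z : Fin (n + 2) → ℤ, z ≠ 0 → 0 < ‖X z‖ := by
    intro z hz
    refine lt_of_lt_of_le (mul_pos hc (norm_pos_iff.2 ?_)) (hb E hEΩ _).1
    intro h
    apply hz
    ext j
    have h' : (z j : ℝ) = 0 := congrFun h j
    exact_mod_cast h'
  set T : Set (Fin (n + 2) → ℤ) := {z | (∃ l : Fin n, z l.succ.succ ≠ 0) ∧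
    ∀ j, (z j).natAbs < 2 ^ (N₀ + N₁)} with hT
  have hTfin : T.Finite := by
    refine (Set.finite_Icc (fun _ => -2 ^ (N₀ + N₁) : Fin (n + 2) → ℤ)
      (fun _ => 2 ^ (N₀ + N₁))).subset ?_
    rintro z ⟨_, hz⟩
    have : ∀ j, |z j| < 2 ^ (N₀ + N₁) := fun j => by
      rw [Int.abs_eq_natAbs]; exact_mod_cast hz j
    exact ⟨fun j => (abs_lt.1 (this j)).1.le, fun j => (abs_lt.1 (this j)).2.le⟩
  -- The finitely many points on the first shells only force `η` to be small.
  have hev : ∀ᶠ η : ℝ in nhdsWithin 0 (Ioi 0), ∀ z ∈ T, η * φ ‖X z‖ < ∏ i, |X z i| := by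
    rw [eventually_all_finite hTfin]
    rintro z ⟨hz, _⟩
    have hp : 0 < ∏ i, |X z i| :=
      lt_of_le_of_ne (Finset.prod_nonneg fun _ _ => abs_nonneg _) (hE0 z hz hEΩ).symm
    have ht : Tendsto (fun η : ℝ => η * φ ‖X z‖) (nhdsWithin 0 (Ioi 0)) (nhds 0) := by
      have : Tendsto (fun η : ℝ => η * φ ‖X z‖) (nhds 0) (nhds (0 * φ ‖X z‖)) :=
        tendsto_id.mul_const _
      rw [zero_mul] at this
      exact this.mono_left nhdsWithin_le_nhds
    exact ht.eventually_lt_const hp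
  have hev1 : ∀ᶠ η : ℝ in nhdsWithin 0 (Ioi 0), η < 1 :=
    (eventually_lt_nhds one_pos).filter_mono nhdsWithin_le_nhds
  obtain ⟨η, ⟨h1, h2⟩, h3⟩ := ((hev.and hev1).and self_mem_nhdsWithin).exists
  refine ⟨η, h3, fun z hz => ?_⟩
  by_cases hzT : ∀ j, (z j).natAbs < 2 ^ (N₀ + N₁)
  · exact (h1 z ⟨hz, hzT⟩).le
  obtain ⟨j, hj⟩ := Finite.exists_max fun j => (z j).natAbs
  have hjN : 2 ^ (N₀ + N₁) ≤ (z j).natAbs := by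
    by_contra! hlt
    exact hzT fun i => (hj i).trans_lt hlt
  have hj0 : (z j).natAbs ≠ 0 := (lt_of_lt_of_le (by positivity) hjN).ne'
  have hz0 : z ≠ 0 := by
    rintro rfl
    simp at hj0
  have hlo := Nat.pow_log_le_self 2 hj0
  have hhi := Nat.lt_pow_succ_log_self (b := 2) one_lt_two (z j).natAbs
  have hνN : N₀ + N₁ ≤ Nat.log 2 (z j).natAbs := Nat.le_log_of_pow_le one_lt_two hjN
  set ν := Nat.log 2 (z j).natAbs with hν
  have hnatabs : ∀ i, |(z i : ℝ)| = (((z i).natAbs : ℕ) : ℝ) := fun i => by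
    rw [Nat.cast_natAbs, Int.cast_abs]
  have hnlo : (2 : ℝ) ^ ν ≤ ‖fun i => (z i : ℝ)‖ := by
    refine le_trans ?_ (norm_le_pi_norm (fun i => (z i : ℝ)) j)
    rw [Real.norm_eq_abs, hnatabs]
    exact_mod_cast hlo
  have hnhi : ‖fun i => (z i : ℝ)‖ ≤ 2 ^ (ν + 1) := by
    rw [pi_norm_le_iff_of_nonneg (by positivity)]
    intro i
    rw [Real.norm_eq_abs, hnatabs]
    exact_mod_cast ((hj i).trans_lt hhi).le
  have hXlo : c * 2 ^ ν ≤ ‖X z‖ := le_trans (by gcongr) (hb E hEΩ _).1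
  have hXhi : ‖X z‖ ≤ C * 2 ^ (ν + 1) := (hb E hEΩ _).2.trans (by gcongr)
  have hprod : δ ν ≤ ∏ i, |X z i| := by
    by_contra! hlt
    have hns := hN₁ (ν - N₀) (by omega)
    rw [Nat.sub_add_cancel (by omega)] at hns
    apply hns
    refine ⟨hEΩ, (z 0, z 1), fun l => z l.succ.succ, ?_, fun l => ?_, hXlo, hXhi, hlt⟩
    · obtain ⟨l, hl⟩ := hz
      exact fun h => hl (congrFun h l)
    · rw [Int.abs_eq_natAbs]
      exact_mod_cast (hj _).trans_lt hhi
  have hφδ : φ ‖X z‖ ≤ δ ν := by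
    apply hanti (by simp only [mem_Ioi]; positivity) (hXpos z hz0)
    refine le_trans ?_ hXlo
    rw [div_le_iff₀ hK0]
    have : 1 ≤ c * K := by
      rw [div_le_iff₀ hc] at hKc
      linarith
    nlinarith [pow_pos (two_pos : (0 : ℝ) < 2) ν]
  calc η * φ ‖X z‖ ≤ 1 * φ ‖X z‖ := by
        have := hφ _ (hXpos z hz0)
        gcongr
    _ ≤ _ := by
        rw [one_mul]
        exact hφδ.trans hprod

/-- **Second Main Lemma.** -/
theorem second_main_lemma (d : ℕ) (hd : 3 ≤ d)
    (e₁ e₂ : Fin d → ℝ) (hind : LinearIndependent ℝ ![e₁, e₂])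
    (u v : Fin d → Fin (d - 2) → ℝ)
    (Ω : Set (Fin d → Fin (d - 2) → ℝ))
    (hΩ : Ω = {E | ∀ i j, E i j ∈ Set.Icc (u i j) (v i j)})
    (hdet : ∀ E ∈ Ω, (Matrix.of fun i k => latticeCols e₁ e₂ E k i).det ≠ 0) :
    ∃ K : ℝ, 1 ≤ K ∧ ∀ φ : ℝ → ℝ,
      (∀ t, 0 < t → 0 < φ t) → AntitoneOn φ (Set.Ioi 0) → Tendsto φ atTop (nhds 0) →
      (Summable fun ν : ℕ => (ν : ℝ) ^ (d - 1) * φ ((2 : ℝ) ^ ν / K)) →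
      (Summable fun ν : ℕ =>
        (ν : ℝ) * (Real.log (1 / φ (K * (2 : ℝ) ^ ν))) ^ (d - 2) * φ ((2 : ℝ) ^ ν / K)) →
      ∀ᵐ E ∂(volume : Measure (Fin d → Fin (d - 2) → ℝ)), E ∈ Ω →
        ∃ η : ℝ, 0 < η ∧ ∀ z : Fin d → ℤ, (∃ j : Fin d, 2 ≤ (j : ℕ) ∧ z j ≠ 0) →
          η * φ ‖(∑ j, (z j : ℝ) • latticeCols e₁ e₂ E j : Fin d → ℝ)‖ ≤
            ∏ i, |(∑ j, (z j : ℝ) • latticeCols e₁ e₂ E j : Fin d → ℝ) i| := by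
  obtain ⟨n, rfl⟩ : ∃ n, d = n + 2 := ⟨d - 2, by omega⟩
  have hΩ' : Ω = Icc u v := by
    rw [hΩ]
    ext E
    exact ⟨fun h => ⟨fun i j => (h i j).1, fun i j => (h i j).2⟩,
      fun h i j => ⟨h.1 i j, h.2 i j⟩⟩
  have hcont : Continuous fun E : Fin (n + 2) → Fin (n + 2 - 2) → ℝ => latticeCols e₁ e₂ E := by
    refine continuous_pi fun j => ?_
    unfold latticeCols
    split_ifs <;> fun_prop
  have hpt : ∀ (E : Fin (n + 2) → Fin n → ℝ) (y : Fin (n + 2) → ℝ),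
      ∑ j, y j • latticeCols e₁ e₂ E j = latticePt e₁ e₂ E y := by
    intro E y
    rw [Fin.sum_univ_succ, Fin.sum_univ_succ, ← add_assoc]
    ext i
    rw [Pi.add_apply, Finset.sum_apply]
    rfl
  obtain ⟨c, C, hc, hcC, hb⟩ := exists_norm_bounds (by omega) Ω (hΩ' ▸ isCompact_Icc)
    (latticeCols e₁ e₂) hcont hdet
  refine ⟨max 1 (1 / c), le_max_left _ _, fun φ hφ hanti hlim hs1 hs2 => ?_⟩
  rcases Ω.eq_empty_or_nonempty with hemp | hne
  · exact Eventually.of_forall fun E hE => absurd hE (by simp [hemp])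
  subst hΩ'
  have hmain := ae_exists_lower_bound (n := n) e₁ e₂ u v hne c C (max 1 (1 / c)) hc hcC
    (le_max_left _ _) (le_max_right _ _)
    (fun E hE y => by have := hb E hE y; rwa [hpt] at this) φ hφ hanti hlim hs1 hs2
  refine hmain.mono fun E hE hEΩ => ?_
  obtain ⟨η, hη, h⟩ := hE hEΩ
  refine ⟨η, hη, ?_⟩
  rintro z ⟨j, hj2, hzj⟩
  rw [hpt E fun j => (z j : ℝ)]
  refine h z ⟨⟨j - 2, by omega⟩, ?_⟩
  convert hzj using 2
  ext
  simp only [Fin.val_succ]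
  omega
end
end

section
/- Let d ≥ 3, K ≥ 1, and let w : (0,∞) → (0,∞) be decreasing to zero as t → ∞, satisfying lim_{δ→0⁺} sup_{t≥1} w(t)/w((1+δ)t) = 1 and such that the series ∑_{ν=1}^∞ ν^{d−1} w(2^ν) converges. Then there exists a function φ : (0,∞) → (0,∞) decreasing to zero such that lim_{t→∞} φ(t)/w(t) = +∞ and both series ∑_{ν=1}^∞ ν^{d−1} φ(2^ν/K) and ∑_{ν=1}^∞ ν (log(1/φ(K·2^ν)))^{d−2} φ(2^ν/K) converge. -/
/-!
The function `φ` is a step function on dyadic blocks, `φ t = b ⌊log₂ t⌋`, for a suitable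
sequence `b`.

Put `u ν = w (2 ^ ν) + 2 ^ (-ν)`. This sequence decreases to `0` and `∑ p ν * u ν` converges for
every weight `p ν = (ν + c) ^ (d - 1)`. For such a `u` there is a decreasing null sequence `b` with
`b / u → ∞` and `∑ p ν * b ν` still convergent (`exists_slower_antitone`). Multiplying `u` by a
slowly growing sequence could destroy monotonicity, so `b` is instead a superposition
`b ν = ∑ⱼ u (max ν (n j))` of truncations of `u`. Each truncation is decreasing; the weighted sum
of the `j`-th one is at most `2 ^ (-j)` if `n j` is chosen large, by dominated convergence; and
`N` of the terms equal `u ν` once `ν ≥ n 0, …, n (N - 1)`.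

Since `w` is decreasing, `φ t / w t ≥ b ν / u ν` on the block `2 ^ ν ≤ t < 2 ^ (ν + 1)`, which tends
to infinity. With `K ≤ 2 ^ m`, dilation by `K` shifts the index by at most `m`, which the choice
`c = 2 * m + 1` absorbs. Finally `2 ^ (-ν) ≤ b ν ≤ 1` for large `ν`, so
`0 ≤ log (1 / φ (K * 2 ^ ν)) ≤ ν + m`, and the second series is dominated by
`∑ (ν + m) ^ (d - 1) * φ (2 ^ ν / K)`, as is the first.
-/

open Filter Set

noncomputable section

/-- A positive decreasing null sequence `u` with `∑ p ν * u ν < ∞` is dominated, with ratio tending to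
infinity, by another decreasing null sequence whose `p`-weighted sum converges. -/
theorem exists_slower_antitone (p u : ℕ → ℝ) (hp : ∀ n, 1 ≤ p n) (hu : ∀ n, 0 < u n)
    (hanti : Antitone u) (hlim : Tendsto u atTop (nhds 0))
    (hsum : Summable fun n => p n * u n) :
    ∃ b : ℕ → ℝ, (∀ n, 0 < b n) ∧ Antitone b ∧ Tendsto b atTop (nhds 0) ∧
      (Summable fun n => p n * b n) ∧ Tendsto (fun n => b n / u n) atTop atTop := by
  have hp0 : ∀ n, 0 < p n := fun n => lt_of_lt_of_le one_pos (hp n)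
  have hbd : ∀ k n, p n * u (max n k) ≤ p n * u n := fun k n =>
    mul_le_mul_of_nonneg_left (hanti (le_max_left _ _)) (hp0 n).le
  have hnn : ∀ k n, 0 ≤ p n * u (max n k) := fun k n => mul_nonneg (hp0 n).le (hu _).le
  have hF : Tendsto (fun k => ∑' n, p n * u (max n k)) atTop (nhds (∑' _ : ℕ, (0 : ℝ))) := by
    refine tendsto_tsum_of_dominated_convergence hsum (fun n => ?_) (.of_forall fun k n => ?_)
    · have h1 : Tendsto (fun k => u (max n k)) atTop (nhds 0) :=
        hlim.comp (tendsto_atTop_mono (fun k => le_max_right n k) tendsto_id)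
      simpa using h1.const_mul (p n)
    · rw [Real.norm_of_nonneg (hnn k n)]
      exact hbd k n
  rw [tsum_zero] at hF
  have hch : ∀ j : ℕ, ∃ k, ∑' n, p n * u (max n k) ≤ (1 / 2 : ℝ) ^ j := fun j =>
    ((hF.eventually (ge_mem_nhds (by positivity : (0 : ℝ) < (1 / 2) ^ j)))).exists
  choose N hN using hch
  have hs1 : ∀ k, Summable fun n => p n * u (max n k) := fun k =>
    Summable.of_nonneg_of_le (hnn k) (hbd k) hsum
  have hs2 : Summable fun x : ℕ × ℕ => p x.2 * u (max x.2 (N x.1)) := by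
    rw [summable_prod_of_nonneg (fun x => hnn _ _)]
    refine ⟨fun j => hs1 (N j), Summable.of_nonneg_of_le (fun j => tsum_nonneg (hnn (N j))) hN ?_⟩
    exact summable_geometric_of_lt_one (by norm_num) (by norm_num)
  have hs3 : Summable fun x : ℕ × ℕ => p x.1 * u (max x.1 (N x.2)) := hs2.prod_symm
  have hs4 : ∀ n, Summable fun j => u (max n (N j)) := fun n =>
    (summable_mul_left_iff (hp0 n).ne').1 (hs3.prod_factor n)
  have hpb : Summable fun n => p n * ∑' j, u (max n (N j)) := by
    simpa only [tsum_mul_left] using hs3.prod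
  have hbpos : ∀ n, 0 < ∑' j, u (max n (N j)) := fun n =>
    (hs4 n).tsum_pos (fun j => (hu _).le) 0 (hu _)
  refine ⟨fun n => ∑' j, u (max n (N j)), hbpos, fun a c hac => ?_, ?_, hpb, ?_⟩
  · exact (hs4 c).tsum_le_tsum (fun j => hanti (max_le_max_right _ hac)) (hs4 a)
  · exact squeeze_zero (fun n => (hbpos n).le)
      (fun n => le_mul_of_one_le_left (hbpos n).le (hp n)) hpb.tendsto_atTop_zero
  · rw [tendsto_atTop]
    intro A
    obtain ⟨M, hM⟩ := exists_nat_ge A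
    filter_upwards [eventually_ge_atTop (∑ j ∈ Finset.range M, N j)] with n hn
    rw [le_div_iff₀ (hu n)]
    have h1 : ∑ j ∈ Finset.range M, u (max n (N j)) = M * u n := by
      rw [Finset.sum_congr rfl (g := fun _ => u n)]
      · simp
      · intro j hj
        rw [max_eq_left]
        exact (Finset.single_le_sum (f := N) (fun _ _ => Nat.zero_le _) hj).trans hn
    calc A * u n ≤ M * u n := by gcongr; exact (hu n).le
      _ = ∑ j ∈ Finset.range M, u (max n (N j)) := h1.symm
      _ ≤ _ := (hs4 n).sum_le_tsum _ (fun j _ => (hu _).le)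

/-- **Lemma 7.** Given `d ≥ 3`, `K ≥ 1` and `w` decreasing to zero with the
regularity condition and `∑ ν^{d−1} w(2^ν) < ∞`, there is a function `φ` decreasing to zero
with `φ(t)/w(t) → ∞` for which both series of the Second Main Lemma converge. -/
theorem exists_phi (d : ℕ) (hd : 3 ≤ d) (K : ℝ) (hK : 1 ≤ K) (w : ℝ → ℝ)
    (hw_pos : ∀ t, 0 < t → 0 < w t)
    (hw_anti : AntitoneOn w (Set.Ioi 0))
    (hw_lim : Tendsto w atTop (nhds 0))
    (hw_reg : Tendsto (fun δ : ℝ => sSup {r : ℝ | ∃ t : ℝ, 1 ≤ t ∧ r = w t / w ((1 + δ) * t)})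
      (nhdsWithin 0 (Set.Ioi 0)) (nhds 1))
    (hw_sum : Summable fun ν : ℕ => (ν : ℝ) ^ (d - 1) * w (2 ^ ν)) :
    ∃ φ : ℝ → ℝ, (∀ t, 0 < t → 0 < φ t) ∧ AntitoneOn φ (Set.Ioi 0) ∧
      Tendsto φ atTop (nhds 0) ∧
      Tendsto (fun t => φ t / w t) atTop atTop ∧
      (Summable fun ν : ℕ => (ν : ℝ) ^ (d - 1) * φ ((2 : ℝ) ^ ν / K)) ∧
      (Summable fun ν : ℕ =>
        (ν : ℝ) * (Real.log (1 / φ (K * (2 : ℝ) ^ ν))) ^ (d - 2) * φ ((2 : ℝ) ^ ν / K)) := by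
  have hK0 : 0 < K := by linarith
  obtain ⟨m, hm⟩ : ∃ m : ℕ, K ≤ 2 ^ m := by
    obtain ⟨m, hm⟩ := pow_unbounded_of_one_lt K (one_lt_two : (1 : ℝ) < 2)
    exact ⟨m, hm.le⟩
  -- The added geometric term gives the lower bound needed to control `log (1 / φ)`.
  set u : ℕ → ℝ := fun n => w (2 ^ n) + (1 / 2) ^ n with hu_def
  have hw2 : ∀ n : ℕ, 0 < w (2 ^ n) := fun n => hw_pos _ (by positivity)
  have hu : ∀ n, 0 < u n := fun n => add_pos (hw2 n) (by positivity)
  have huanti : Antitone u := fun a c hac => add_le_add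
    (hw_anti (mem_Ioi.2 (by positivity)) (mem_Ioi.2 (by positivity))
      (pow_le_pow_right₀ one_le_two hac))
    (pow_le_pow_of_le_one (by norm_num) (by norm_num) hac)
  have hulim : Tendsto u atTop (nhds 0) := by
    have h1 := hw_lim.comp (tendsto_pow_atTop_atTop_of_one_lt (one_lt_two : (1 : ℝ) < 2))
    have h2 := tendsto_pow_atTop_nhds_zero_of_lt_one
      (by norm_num : (0 : ℝ) ≤ 1 / 2) (by norm_num)
    simpa [hu_def, Function.comp_def] using h1.add h2
  have husum : Summable fun n : ℕ => (n : ℝ) ^ (d - 1) * u n := by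
    have h2 := summable_pow_mul_geometric_of_norm_lt_one (d - 1)
      (by norm_num : ‖(1 / 2 : ℝ)‖ < 1)
    simpa only [hu_def, mul_add] using hw_sum.add h2
  have hpsum : Summable fun n : ℕ => ((n : ℝ) + 2 * m + 1) ^ (d - 1) * u n := by
    refine Summable.of_norm_bounded_eventually_nat
      (husum.mul_left ((2 * (m : ℝ) + 2) ^ (d - 1))) ?_
    filter_upwards [eventually_ge_atTop 1] with n hn
    have hn' : (1 : ℝ) ≤ n := by exact_mod_cast hn
    have hm0 : (0 : ℝ) ≤ m := m.cast_nonneg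
    have := hu n
    rw [Real.norm_of_nonneg (by positivity), ← mul_assoc, ← mul_pow]
    gcongr
    nlinarith
  obtain ⟨b, hb, hbanti, hblim, hbsum, hbu⟩ := exists_slower_antitone
    (fun n : ℕ => ((n : ℝ) + 2 * m + 1) ^ (d - 1)) u
    (fun n => one_le_pow₀ (by
      have : (0 : ℝ) ≤ (n : ℝ) + 2 * m := by positivity
      linarith)) hu huanti hulim hpsum
  set ι : ℝ → ℕ := fun t => Nat.log 2 ⌊t⌋₊ with hι
  have hιmono : Monotone ι := fun s t hst => Nat.log_mono_right (Nat.floor_mono hst)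
  have hιpow : ∀ n : ℕ, ι (2 ^ n) = n := fun n => by
    have : ((2 : ℝ) ^ n) = ((2 ^ n : ℕ) : ℝ) := by push_cast; rfl
    simp only [hι]
    rw [this, Nat.floor_natCast, Nat.log_pow one_lt_two]
  have hιtop : Tendsto ι atTop atTop :=
    tendsto_atTop_atTop_of_monotone hιmono fun n => ⟨2 ^ n, (hιpow n).ge⟩
  have hφanti : Antitone fun t => b (ι t) := hbanti.comp_monotone hιmono
  have hφlim : Tendsto (fun t => b (ι t)) atTop (nhds 0) := hblim.comp hιtop
  have hmain : Summable fun ν : ℕ => ((ν : ℝ) + m) ^ (d - 1) * b (ι ((2 : ℝ) ^ ν / K)) := by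
    rw [← summable_nat_add_iff m]
    refine Summable.of_nonneg_of_le (fun n => ?_) (fun n => ?_) hbsum
    · exact mul_nonneg (by positivity) (hb _).le
    · have h1 : b (ι ((2 : ℝ) ^ (n + m) / K)) ≤ b n := by
        conv_rhs => rw [← hιpow n]
        refine hφanti ?_
        rw [le_div_iff₀ hK0, pow_add]
        gcongr
      have := (hb (ι ((2 : ℝ) ^ (n + m) / K))).le
      have h2 : ((n + m : ℕ) : ℝ) + m ≤ (n : ℝ) + 2 * m + 1 := by push_cast; linarith
      exact mul_le_mul (pow_le_pow_left₀ (by positivity) h2 _) h1 this (by positivity)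
  refine ⟨fun t => b (ι t), fun t _ => hb _, hφanti.antitoneOn _, hφlim, ?_, ?_, ?_⟩
  · refine tendsto_atTop_mono' _ ?_ (hbu.comp hιtop)
    filter_upwards [eventually_ge_atTop 1] with t ht
    have ht0 : 0 < t := by linarith
    have h1 : (2 : ℝ) ^ ι t ≤ t := by
      have h2 : 2 ^ ι t ≤ ⌊t⌋₊ := Nat.pow_log_le_self 2 (Nat.floor_pos.2 ht).ne'
      calc (2 : ℝ) ^ ι t = ((2 ^ ι t : ℕ) : ℝ) := by push_cast; rfl
        _ ≤ (⌊t⌋₊ : ℝ) := by exact_mod_cast h2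
        _ ≤ t := Nat.floor_le ht0.le
    have h3 : w t ≤ u (ι t) :=
      (hw_anti (mem_Ioi.2 (by positivity)) ht0 h1).trans
        (le_add_of_nonneg_right (by positivity))
    exact div_le_div_of_nonneg_left (hb _).le (hw_pos t ht0) h3
  · refine Summable.of_nonneg_of_le (fun n => ?_) (fun n => ?_) hmain
    · exact mul_nonneg (by positivity) (hb _).le
    · have := (hb (ι ((2 : ℝ) ^ n / K))).le
      dsimp only
      gcongr
      linarith [(m.cast_nonneg : (0 : ℝ) ≤ m)]
  · refine Summable.of_norm_bounded_eventually_nat hmain ?_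
    have hKtop : Tendsto (fun ν : ℕ => K * (2 : ℝ) ^ ν) atTop atTop :=
      (tendsto_pow_atTop_atTop_of_one_lt (one_lt_two : (1 : ℝ) < 2)).const_mul_atTop hK0
    have hsmall : ∀ᶠ ν : ℕ in atTop, b (ι (K * (2 : ℝ) ^ ν)) ≤ 1 :=
      (hφlim.comp hKtop).eventually (ge_mem_nhds one_pos)
    have hbig : ∀ᶠ ν : ℕ in atTop, 1 ≤ b (ν + m) / u (ν + m) :=
      (hbu.comp (tendsto_add_atTop_nat m)).eventually_ge_atTop 1
    filter_upwards [hsmall, hbig] with ν hs hg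
    rw [one_le_div (hu _)] at hg
    have hlow : ((1 : ℝ) / 2) ^ (ν + m) ≤ b (ι (K * (2 : ℝ) ^ ν)) := by
      calc ((1 : ℝ) / 2) ^ (ν + m) ≤ u (ν + m) := le_add_of_nonneg_left (hw2 _).le
        _ ≤ b (ν + m) := hg
        _ = b (ι (2 ^ (ν + m))) := by rw [hιpow]
        _ ≤ _ := hφanti (by rw [pow_add, mul_comm K]; gcongr)
    have hbK := hb (ι (K * (2 : ℝ) ^ ν))
    have hlog0 : 0 ≤ Real.log (1 / b (ι (K * (2 : ℝ) ^ ν))) :=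
      Real.log_nonneg ((one_le_div hbK).2 hs)
    have hlog1 : Real.log (1 / b (ι (K * (2 : ℝ) ^ ν))) ≤ (ν : ℝ) + m := by
      have h1 : 1 / b (ι (K * (2 : ℝ) ^ ν)) ≤ 2 ^ (ν + m) := by
        rw [div_le_iff₀ hbK]
        calc (1 : ℝ) = 2 ^ (ν + m) * (1 / 2) ^ (ν + m) := by rw [← mul_pow]; norm_num
          _ ≤ _ := by gcongr
      have h2 := Real.log_le_log (by positivity) h1
      rw [Real.log_pow] at h2
      push_cast at h2
      have h3 : Real.log 2 ≤ 1 := by linarith [Real.log_two_lt_d9]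
      have h4 : (0 : ℝ) ≤ (ν : ℝ) + m := by positivity
      nlinarith
    have hbν := (hb (ι ((2 : ℝ) ^ ν / K))).le
    rw [Real.norm_of_nonneg (by positivity), show d - 1 = (d - 2) + 1 by omega,
      pow_succ' ((ν : ℝ) + m)]
    gcongr
    linarith [(m.cast_nonneg : (0 : ℝ) ≤ m)]
end
end

section
/- (Baker–Ward) Let ψ : (0,∞) → (0,∞) be a function such that t·ψ(t) decreases to 0 as t → ∞. Define ω(t) = 90·t·ψ(1/(2ψ(t))) and ψ_1(t) = ψ(t)(1 − ω(t)). Then there exists an uncountable set E ⊂ [0,1] of irrational numbers with the following property: for every α ∈ E, (i) there are infinitely many positive integers q with ‖qα‖ ≤ ψ(q), and (ii) there exists q_0 such that ‖qα‖ ≥ ψ_1(q) for all integers q ≥ q_0. -/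
/-!
The number `α` is the intersection of nested windows
`{α | ψ₁(q) ≤ q α - p ≤ ψ(q)}` around reduced fractions `p/q`, so (i) is automatic. Put
`s = 1 / (2 ψ(q))`. On such a window every `P/Q ≠ p/q` with `Q ≤ s` satisfies
`|Q α - P| ≥ 1 / (2 q)`, because `|Q p - P q| ≥ 1`; this controls the denominators comparable
to `q` and those between `q` and `s` (`window_bound`).

The next fraction `p'/q'` must deal with the denominators between `s` and `q'` (`exists_next`).
The window has length `90 ψ(q) ψ(s) = 45 ψ(s) / s`, so a third of it still has length
`ℓ = 15 ψ(s) / s`. An interval game (`exists_badly_approx`) yields a point `x` well inside that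
third with `|x - P/Q| ≥ min (ℓ / 8, 1 / (32 Q²))` for all `P/Q`, and both terms exceed
`ψ(Q) / Q` with room to spare when `Q ≥ s`. A Dirichlet approximation `p'/q'` of `x` with
`q' ≤ N` then has `q' ≥ (N + 1) / 32`, so the window of `p'/q'` lies within `O(N⁻²)` of `x`. For
`Q` up to a small multiple of `N` the lower bound at `x` passes to that window, and for larger `Q`
`window_bound` applies.

Since the third can be chosen to miss any given point, a diagonal argument against an enumeration
of `E ∪ ℚ` gives both uncountability and irrationality.
-/

open Filter Set

noncomputable section

/-! ### Badly approximable points in an interval -/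

/-- One step of the interval game: all rationals of denominator below `ℓ^(-1/2)` can be kept at
distance `ℓ / 8` by passing to a quarter of an interval of length `ℓ`. Two such rationals are more
than `ℓ` apart, so if one of them lies in the right half then none lies elsewhere in the interval. -/
lemma game_step (a ℓ : ℝ) (hℓ : 0 < ℓ) :
    ∃ a' : ℝ, a + ℓ / 8 ≤ a' ∧ a' + ℓ / 4 ≤ a + 7 * ℓ / 8 ∧
      ∀ (P : ℤ) (Q : ℕ), 0 < Q → (Q : ℝ) ^ 2 * ℓ < 1 →
        ∀ x ∈ Icc a' (a' + ℓ / 4), ℓ / 8 ≤ |x - P / Q| := by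
  by_cases h : ∃ (P : ℤ) (Q : ℕ), 0 < Q ∧ (Q : ℝ) ^ 2 * ℓ < 1 ∧
      a + ℓ / 2 ≤ (P : ℝ) / Q ∧ (P : ℝ) / Q ≤ a + ℓ
  · obtain ⟨P₀, Q₀, hQ₀, hsq₀, hl, hr⟩ := h
    refine ⟨a + ℓ / 8, le_rfl, by linarith, fun P Q hQ hsq x hx => ?_⟩
    obtain ⟨hx1, hx2⟩ := hx
    have hQ' : (0 : ℝ) < Q := by exact_mod_cast hQ
    have hQ₀' : (0 : ℝ) < Q₀ := by exact_mod_cast hQ₀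
    by_cases he : P * (Q₀ : ℤ) - P₀ * Q = 0
    · have : (P : ℝ) / Q = P₀ / Q₀ := by
        rw [div_eq_div_iff hQ'.ne' hQ₀'.ne']
        exact_mod_cast sub_eq_zero.mp he
      rw [this]
      exact le_abs.mpr (Or.inr (by linarith))
    · have h1 : (1 : ℝ) ≤ |(P : ℝ) * Q₀ - P₀ * Q| := by exact_mod_cast Int.one_le_abs he
      have hprod : (Q : ℝ) * Q₀ * ℓ < 1 := by nlinarith [sq_nonneg ((Q : ℝ) - Q₀)]
      have hsep : ℓ < |(P : ℝ) / Q - P₀ / Q₀| := by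
        rw [div_sub_div _ _ hQ'.ne' hQ₀'.ne', abs_div, abs_of_pos (mul_pos hQ' hQ₀'),
          lt_div_iff₀ (mul_pos hQ' hQ₀'), mul_comm (Q : ℝ) (P₀ : ℝ)]
        linarith
      rcases lt_abs.mp hsep with h2 | h2
      · exact le_abs.mpr (Or.inr (by linarith))
      · exact le_abs.mpr (Or.inl (by linarith))
  · push Not at h
    refine ⟨a + 5 * ℓ / 8, by linarith, by linarith, fun P Q hQ hsq x hx => ?_⟩
    obtain ⟨hx1, hx2⟩ := hx
    rcases lt_or_ge ((P : ℝ) / Q) (a + ℓ / 2) with h1 | h1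
    · exact le_abs.mpr (Or.inl (by linarith))
    · have := h P Q hQ hsq h1
      exact le_abs.mpr (Or.inr (by linarith))

/-- Nested closed intervals of the real line have a common point. -/
lemma nested_Icc (a b : ℕ → ℝ) (hab : ∀ k, a k ≤ b k)
    (hn : ∀ k, Icc (a (k + 1)) (b (k + 1)) ⊆ Icc (a k) (b k)) :
    ∃ x, ∀ k, x ∈ Icc (a k) (b k) := by
  obtain ⟨x, hx⟩ := IsCompact.nonempty_iInter_of_sequence_nonempty_isCompact_isClosed
    (fun k => Icc (a k) (b k)) hn (fun k => nonempty_Icc.mpr (hab k)) isCompact_Icc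
    (fun k => isClosed_Icc)
  exact ⟨x, fun k => mem_iInter.mp hx k⟩

/-- Every interval contains, well inside it, a badly approximable number, with a constant that is
uniform once the denominator is at least the inverse square root of the length. -/
lemma exists_badly_approx (a ℓ : ℝ) (hℓ : 0 < ℓ) :
    ∃ x ∈ Icc (a + ℓ / 8) (a + 7 * ℓ / 8), ∀ (P : ℤ) (Q : ℕ), 0 < Q →
      ℓ / 8 ≤ |x - P / Q| ∨ 1 / (32 * (Q : ℝ) ^ 2) ≤ |x - P / Q| := by
  choose! F hF using game_step
  let A : ℕ → ℝ := fun n => Nat.rec a (fun k y => F y (ℓ / 4 ^ k)) n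
  have hA : ∀ k, A (k + 1) = F (A k) (ℓ / 4 ^ k) := fun k => rfl
  have hpos : ∀ k : ℕ, 0 < ℓ / 4 ^ k := fun k => by positivity
  have hquart : ∀ k : ℕ, ℓ / 4 ^ (k + 1) = ℓ / 4 ^ k / 4 := fun k => by
    rw [pow_succ]; field_simp
  obtain ⟨x, hx⟩ := nested_Icc A (fun k => A k + ℓ / 4 ^ k)
    (fun k => by linarith [hpos k]) (fun k => by
      obtain ⟨h1, h2, -⟩ := hF (A k) (ℓ / 4 ^ k) (hpos k)
      rw [← hA] at h1 h2
      have := hpos k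
      refine Icc_subset_Icc (by linarith) ?_
      simp only [hquart]
      linarith)
  have key : ∀ k (P : ℤ) (Q : ℕ), 0 < Q → (Q : ℝ) ^ 2 * (ℓ / 4 ^ k) < 1 →
      ℓ / 4 ^ k / 8 ≤ |x - P / Q| := by
    intro k P Q hQ hsq
    refine (hF (A k) (ℓ / 4 ^ k) (hpos k)).2.2 P Q hQ hsq x ?_
    have := hx (k + 1)
    rwa [hA, hquart] at this
  refine ⟨x, ?_, fun P Q hQ => ?_⟩
  · obtain ⟨h1, h2, -⟩ := hF a ℓ hℓ
    have h3 := hx 1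
    have hA1 : A 1 = F a ℓ := by simp [A]
    simp only [hA1, pow_one] at h3
    exact ⟨h1.trans h3.1, h3.2.trans h2⟩
  · have hQ' : (0 : ℝ) < Q := by exact_mod_cast hQ
    have hex : ∃ k : ℕ, (Q : ℝ) ^ 2 * (ℓ / 4 ^ k) < 1 := by
      obtain ⟨k, hk⟩ := pow_unbounded_of_one_lt ((Q : ℝ) ^ 2 * ℓ) (by norm_num : (1 : ℝ) < 4)
      refine ⟨k, ?_⟩
      rw [← mul_div_assoc, div_lt_one (by positivity)]
      exact hk
    classical
    have hk := Nat.find_spec hex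
    have hmin := fun m => Nat.find_min hex (m := m)
    generalize Nat.find hex = k at hk hmin
    cases k with
    | zero => left; simpa using key 0 P Q hQ hk
    | succ k =>
      right
      have h1 := key (k + 1) P Q hQ hk
      have h2 := hmin k (Nat.lt_succ_self k)
      push Not at h2
      refine le_trans ?_ h1
      rw [hquart, div_le_iff₀ (by positivity)]
      nlinarith

/-! ### Windows around rationals -/

/-- The relative loss `ω(t) = 90 t ψ(1 / (2 ψ(t)))`. -/
def loss (ψ : ℝ → ℝ) (t : ℝ) : ℝ := 90 * t * ψ (1 / (2 * ψ t))

/-- The set of `α` lying to the right of `r = p/q` (in lowest terms) with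
`ψ₁(q) ≤ q α - p ≤ ψ(q)`. -/
def window (ψ : ℝ → ℝ) (r : ℚ) : Set ℝ :=
  Icc ((r.num + ψ r.den * (1 - loss ψ r.den)) / r.den) ((r.num + ψ r.den) / r.den)

section
variable {ψ : ℝ → ℝ} (hpos : ∀ t, 0 < t → 0 < ψ t)
  (hanti : AntitoneOn (fun t => t * ψ t) (Set.Ioi 0))
include hpos

lemma loss_nonneg {t : ℝ} (ht : 0 < t) : 0 ≤ loss ψ t := by
  have := hpos _ (one_div_pos.mpr (mul_pos two_pos (hpos t ht)))
  unfold loss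
  positivity

variable {T : ℝ} (hT1 : 1 ≤ T) (hT : ∀ t, T ≤ t → t * ψ t ≤ 1 / 1024)

include hT1 hT in
lemma le_half_inv {t : ℝ} (ht : T ≤ t) : 512 * t ≤ 1 / (2 * ψ t) := by
  have h := hT t ht
  have := hpos t (by linarith)
  rw [le_div_iff₀ (by positivity)]
  linarith

include hanti

lemma psi_anti {t u : ℝ} (ht : 0 < t) (htu : t ≤ u) : ψ u ≤ ψ t := by
  have h := hanti (mem_Ioi.mpr ht) (mem_Ioi.mpr (ht.trans_le htu)) htu
  have h1 := hpos u (ht.trans_le htu)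
  simp only at h
  refine le_of_mul_le_mul_left ?_ ht
  nlinarith

include hT1 hT

lemma loss_le_half {t : ℝ} (ht : T ≤ t) : loss ψ t ≤ 1 / 2 := by
  have hp := hpos t (by linarith)
  have h1 := le_half_inv hpos hT1 hT ht
  have h2 := psi_anti hpos hanti (by linarith : 0 < t)
    (by linarith : t ≤ 1 / (2 * ψ t))
  have h3 := hT t ht
  unfold loss
  nlinarith

/-- On the window of `r = p/q`, every denominator `Q ≤ 1 / (2 ψ(q))` that is not much smaller than
`q` is under control: a fraction `P/Q ≠ r` satisfies `|Q α - P| ≥ 1 / (2 q)`, and the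
multiples of `q` inherit their bound from `q`. -/
lemma window_bound {r : ℚ} (hr : T ≤ r.den) {α : ℝ} (hα : α ∈ window ψ r) (P : ℤ) (Q : ℕ)
    (hTQ : T ≤ Q) (hQ : (Q : ℝ) ≤ 1 / (2 * ψ r.den)) (hcomp : (r.den : ℝ) ≤ 64 * Q) :
    ψ Q * (1 - loss ψ Q) ≤ |Q * α - P| := by
  have hd : (0 : ℝ) < r.den := by linarith
  have hQ0 : (0 : ℝ) < Q := by linarith
  have hψd := hpos _ hd
  have hψQ := hpos _ hQ0
  have hlQ := loss_nonneg hpos hQ0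
  obtain ⟨hα1, hα2⟩ := hα
  rw [div_le_iff₀ hd] at hα1
  rw [le_div_iff₀ hd] at hα2
  have hhalf := loss_le_half hpos hanti hT1 hT hr
  have hψ1 : ψ Q * (1 - loss ψ Q) ≤ ψ Q := by nlinarith
  by_cases he : (Q : ℤ) * r.num - P * r.den = 0
  · have hdvd : (r.den : ℤ) ∣ Q := by
      have hc : IsCoprime (r.den : ℤ) r.num :=
        (Int.isCoprime_iff_gcd_eq_one.mpr (by
          have := r.reduced
          rw [Int.gcd_comm]; simpa [Int.gcd, Nat.Coprime] using this))
      exact hc.dvd_of_dvd_mul_right ⟨P, by linarith⟩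
    obtain ⟨m, hm⟩ := Int.natCast_dvd_natCast.mp hdvd
    have hmR : (Q : ℝ) = r.den * m := by exact_mod_cast hm
    have hm0 : m ≠ 0 := by
      rintro rfl
      simp [hmR] at hQ0
    have hP : (P : ℝ) = m * r.num := by
      have h1 : (Q : ℝ) * r.num - P * r.den = 0 := by exact_mod_cast he
      rw [hmR] at h1
      have : (r.den : ℝ) * (m * r.num - P) = 0 := by linarith
      rcases mul_eq_zero.mp this with h | h
      · exact absurd h hd.ne'
      · linarith
    have heq : (Q : ℝ) * α - P = m * (α * r.den - r.num) := by rw [hmR, hP]; ring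
    rw [heq]
    refine le_trans ?_ (le_abs_self _)
    rcases Nat.lt_or_ge m 2 with h | h
    · have : m = 1 := by omega
      subst this
      rw [hmR]
      simp only [Nat.cast_one, mul_one, one_mul]
      linarith
    · have h2 : (2 : ℝ) ≤ m := by exact_mod_cast h
      have h3 : ψ Q ≤ ψ r.den := psi_anti hpos hanti hd (by rw [hmR]; nlinarith)
      have h4 : ψ r.den / 2 ≤ α * r.den - r.num := by nlinarith
      nlinarith
  · have h1 : (1 : ℝ) ≤ |(Q : ℝ) * r.num - P * r.den| := by exact_mod_cast Int.one_le_abs he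
    have hq : (Q : ℝ) * ψ r.den ≤ 1 / 2 := by
      rw [le_div_iff₀ (by positivity)] at hQ
      linarith
    have hψQ2 := hT Q hTQ
    have e1 : 0 ≤ α * r.den - r.num := by nlinarith
    have e2 : α * r.den - r.num ≤ ψ r.den := by linarith
    have h2 : |(Q : ℝ) * (α * r.den - r.num)| ≤ 1 / 2 := by
      rw [abs_of_nonneg (by positivity)]
      nlinarith
    have h3 : (1 : ℝ) / 2 ≤ |r.den * (Q * α - P)| := by
      have : (r.den : ℝ) * (Q * α - P)
          = (Q * r.num - P * r.den) + Q * (α * r.den - r.num) := by ring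
      rw [this]
      have := abs_sub_abs_le_abs_sub ((Q : ℝ) * r.num - P * r.den)
        (-(Q * (α * r.den - r.num)))
      rw [abs_neg, sub_neg_eq_add] at this
      linarith
    rw [abs_mul, abs_of_pos hd] at h3
    refine hψ1.trans (le_of_mul_le_mul_left ?_ hd)
    nlinarith

set_option maxHeartbeats 1000000 in
/-- The inductive step: inside the window of `r` and away from a prescribed point `y`, there is a
window of some `r'` on which all denominators between the two thresholds `1 / (2 ψ(q))` and
`1 / (2 ψ(q'))` satisfy the lower bound. The fraction `r'` is a Dirichlet approximation to a badly
approximable point of the window of `r`. -/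
lemma exists_next {r : ℚ} (hr : T ≤ r.den) (y : ℝ) :
    ∃ r' : ℚ, r.den < r'.den ∧ window ψ r' ⊆ window ψ r ∧ y ∉ window ψ r' ∧
      ∀ α ∈ window ψ r', ∀ (P : ℤ) (Q : ℕ), 1 / (2 * ψ r.den) ≤ Q →
        (Q : ℝ) ≤ 1 / (2 * ψ r'.den) → ψ Q * (1 - loss ψ Q) ≤ |Q * α - P| := by
  have hd : (0 : ℝ) < r.den := by linarith
  have hψd := hpos _ hd
  set s : ℝ := 1 / (2 * ψ r.den) with hs
  have hs512 : 512 * (r.den : ℝ) ≤ s := le_half_inv hpos hT1 hT hr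
  have hs0 : 0 < s := by linarith
  have hψs := hpos _ hs0
  have hss : s * ψ r.den = 1 / 2 := by rw [hs]; field_simp
  set ℓ : ℝ := 30 * ψ r.den * ψ s with hℓ
  have hℓ0 : 0 < ℓ := by positivity
  have hℓs : ℓ * s = 15 * ψ s := by rw [hℓ]; linear_combination 30 * ψ s * hss
  -- The window has length `3 ℓ`; one of its two outer thirds misses `y`.
  obtain ⟨a, ha, hya⟩ : ∃ a, Icc a (a + ℓ) ⊆ window ψ r ∧ y ∉ Icc a (a + ℓ) := by
    have hlen : ((r.num : ℝ) + ψ r.den) / r.den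
        = (r.num + ψ r.den * (1 - loss ψ r.den)) / r.den + 3 * ℓ := by
      rw [hℓ, loss, ← hs]; field_simp; ring
    unfold window
    rw [hlen]
    generalize ((r.num : ℝ) + ψ r.den * (1 - loss ψ r.den)) / r.den = A
    by_cases h : y < A + 2 * ℓ
    · exact ⟨A + 2 * ℓ, Icc_subset_Icc (by linarith) (by linarith), fun h' => by linarith [h'.1]⟩
    · exact ⟨A, Icc_subset_Icc (by linarith) (by linarith), fun h' => by linarith [h'.2]⟩
  obtain ⟨x, hx, hbad⟩ := exists_badly_approx a ℓ hℓ0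
  obtain ⟨N, hN⟩ := exists_nat_gt (max (max 1 (1320 / ℓ)) (32 * r.den))
  simp only [max_lt_iff] at hN
  obtain ⟨⟨hN1, hN2⟩, hN3⟩ := hN
  have hN0 : 0 < N := by
    have : (0 : ℝ) < N := by linarith
    exact_mod_cast this
  rw [div_lt_iff₀ hℓ0] at hN2
  set M : ℝ := N + 1 with hM
  have hM0 : 0 < M := by linarith
  have hMl : 33 / M ^ 2 ≤ ℓ / 40 := by
    rw [div_le_iff₀ (by positivity)]
    nlinarith
  obtain ⟨r', hr', hden⟩ := Real.exists_rat_abs_sub_le_and_den_le x hN0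
  have hr'cast : (r' : ℝ) = r'.num / r'.den := by exact_mod_cast (Rat.num_div_den r').symm
  have hdenN : (r'.den : ℝ) ≤ N := by exact_mod_cast hden
  have hd'1 : (1 : ℝ) ≤ r'.den := by exact_mod_cast r'.pos
  have hd' : (0 : ℝ) < r'.den := by linarith
  -- Bad approximability forces the Dirichlet denominator to be comparable to `N`.
  have hlow : M ≤ 32 * r'.den := by
    rcases hbad r'.num r'.den r'.pos with h | h
    · exfalso
      rw [← hr'cast] at h
      have h1 := h.trans hr'
      rw [le_div_iff₀ (by positivity)] at h1
      have h2 : (N : ℝ) * ℓ ≤ ℓ * (M * r'.den) := by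
        have : M * 1 ≤ M * r'.den := by gcongr
        nlinarith
      nlinarith
    · rw [← hr'cast] at h
      have h1 := h.trans hr'
      rw [div_le_div_iff₀ (by positivity) (by positivity)] at h1
      refine le_of_mul_le_mul_right ?_ hd'
      nlinarith
  have hrr : (r.den : ℝ) < r'.den := by linarith
  have hT' : T ≤ r'.den := by linarith
  have hψd' := hpos _ hd'
  have hψd'' := hT _ hT'
  have hhalf := loss_le_half hpos hanti hT1 hT hT'
  have hclose : ∀ α ∈ window ψ r', |α - x| ≤ 33 / M ^ 2 := by
    intro α hα
    have h1 : |x - r'| ≤ 32 / M ^ 2 := by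
      refine hr'.trans ?_
      rw [div_le_div_iff₀ (by positivity) (by positivity)]
      nlinarith
    have h2 : |α - r'| ≤ 1 / M ^ 2 := by
      obtain ⟨hα1, hα2⟩ := hα
      rw [div_le_iff₀ hd'] at hα1
      rw [le_div_iff₀ hd'] at hα2
      have e : α - r' = (α * r'.den - r'.num) / r'.den := by rw [hr'cast]; field_simp
      have e1 : 0 ≤ α * r'.den - r'.num := by nlinarith
      rw [e, abs_of_nonneg (by positivity), div_le_div_iff₀ hd' (by positivity)]
      have e2 : α * r'.den - r'.num ≤ ψ r'.den := by linarith
      calc (α * r'.den - r'.num) * M ^ 2 ≤ ψ r'.den * (32 * r'.den) ^ 2 := by gcongr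
        _ = r'.den * (1024 * (r'.den * ψ r'.den)) := by ring
        _ ≤ 1 * r'.den := by nlinarith
    have e3 : α - x = (α - r') - (x - r') := by ring
    rw [e3]
    refine (abs_sub _ _).trans ?_
    have : 33 / M ^ 2 = 1 / M ^ 2 + 32 / M ^ 2 := by ring
    linarith
  have hsub : window ψ r' ⊆ Icc a (a + ℓ) := by
    intro α hα
    have h := abs_le.mp (hclose α hα)
    exact ⟨by linarith [hx.1, h.1], by linarith [hx.2, h.2]⟩
  refine ⟨r', by exact_mod_cast hrr, hsub.trans ha, fun h => hya (hsub h), ?_⟩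
  intro α hα P Q hQs hQs'
  have hTQ : T ≤ Q := by linarith
  rcases le_or_gt M (64 * Q) with hc | hc
  · exact window_bound hpos hanti hT1 hT hT' hα P Q hTQ hQs' (by linarith)
  · have hQ0 : (0 : ℝ) < Q := by linarith
    have hψQ := hpos _ hQ0
    have hlQ := loss_nonneg hpos hQ0
    have hψ1 : ψ Q * (1 - loss ψ Q) ≤ ψ Q := by nlinarith
    have hψQ2 := hT Q hTQ
    refine hψ1.trans ?_
    have e : (Q : ℝ) * α - P = Q * (α - P / Q) := by field_simp
    rw [e, abs_mul, abs_of_pos hQ0]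
    have htri : |x - P / Q| - 33 / M ^ 2 ≤ |α - P / Q| := by
      have h1 := abs_sub_le x α ((P : ℝ) / Q)
      rw [abs_sub_comm x α] at h1
      linarith [hclose α hα]
    rcases hbad P Q (by exact_mod_cast hQ0) with h | h
    · have h1 : ℓ / 10 ≤ |α - P / Q| := by linarith
      have h2 : ψ Q ≤ ψ s := psi_anti hpos hanti hs0 hQs
      have h3 : ψ s ≤ s * (ℓ / 10) := by nlinarith
      calc ψ Q ≤ s * (ℓ / 10) := h2.trans h3
        _ ≤ Q * |α - P / Q| := by gcongr
    · have h1 : 33 / M ^ 2 ≤ 1 / (64 * (Q : ℝ) ^ 2) := by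
        rw [div_le_div_iff₀ (by positivity) (by positivity)]
        nlinarith
      have h2 : 1 / (32 * (Q : ℝ) ^ 2) = 1 / (64 * (Q : ℝ) ^ 2) + 1 / (64 * (Q : ℝ) ^ 2) := by
        field_simp; norm_num
      have h3 : 1 / (64 * (Q : ℝ) ^ 2) ≤ |α - P / Q| := by linarith
      calc ψ Q = (Q * ψ Q) / Q := by field_simp
        _ ≤ (1 / 1024) / Q := by gcongr
        _ ≤ (1 / 64) / Q := by gcongr; norm_num
        _ = Q * (1 / (64 * (Q : ℝ) ^ 2)) := by field_simp
        _ ≤ Q * |α - P / Q| := by gcongr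

end

/-! ### The nested construction -/

theorem baker_ward (ψ : ℝ → ℝ) (hψ_pos : ∀ t, 0 < t → 0 < ψ t)
    (h_anti : AntitoneOn (fun t => t * ψ t) (Set.Ioi 0))
    (h_lim : Tendsto (fun t => t * ψ t) atTop (nhds 0)) :
    ∃ E : Set ℝ, E ⊆ Set.Icc 0 1 ∧ ¬ E.Countable ∧ (∀ α ∈ E, Irrational α) ∧
      ∀ α ∈ E,
        {q : ℕ | 0 < q ∧ |(q : ℝ) * α - (round ((q : ℝ) * α) : ℤ)| ≤ ψ q}.Infinite ∧
        ∃ q₀ : ℕ, ∀ q : ℕ, q₀ ≤ q →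
          ψ q * (1 - 90 * q * ψ (1 / (2 * ψ q))) ≤
            |(q : ℝ) * α - (round ((q : ℝ) * α) : ℤ)| := by
  obtain ⟨T, hT1, hT⟩ : ∃ T : ℝ, 1 ≤ T ∧ ∀ t, T ≤ t → t * ψ t ≤ 1 / 1024 := by
    obtain ⟨T₀, hT₀⟩ := eventually_atTop.mp
      (h_lim.eventually (eventually_le_nhds (by norm_num : (0 : ℝ) < 1 / 1024)))
    exact ⟨max 1 T₀, le_max_left _ _, fun t ht => hT₀ t ((le_max_right _ _).trans ht)⟩
  let E : Set ℝ := {α | α ∈ Set.Icc (0 : ℝ) 1 ∧ Irrational α ∧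
        {q : ℕ | 0 < q ∧ |(q : ℝ) * α - (round ((q : ℝ) * α) : ℤ)| ≤ ψ q}.Infinite ∧
        ∃ q₀ : ℕ, ∀ q : ℕ, q₀ ≤ q →
          ψ q * (1 - 90 * q * ψ (1 / (2 * ψ q))) ≤
            |(q : ℝ) * α - (round ((q : ℝ) * α) : ℤ)|}
  refine ⟨E, fun α h => h.1, fun hE => ?_, fun α h => h.2.1, fun α h => h.2.2⟩
  -- Diagonal argument: the construction can avoid any sequence, here an enumeration of `E ∪ ℚ`.
  obtain ⟨y, hy⟩ := (hE.union (Set.countable_range ((↑) : ℚ → ℝ))).exists_eq_range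
    ⟨((0 : ℚ) : ℝ), Or.inr ⟨0, rfl⟩⟩
  obtain ⟨n, hn⟩ := exists_nat_gt (max 2 T)
  rw [max_lt_iff] at hn
  have hn0 : n ≠ 0 := by
    rintro rfl
    norm_num at hn
  let r₀ : ℚ := (n : ℚ)⁻¹
  have hden₀ : r₀.den = n := by simp [r₀, hn0]
  have hnum₀ : r₀.num = 1 := by
    simp only [r₀, Rat.num_inv, Rat.num_natCast, Rat.den_natCast]
    simpa using Nat.pos_of_ne_zero hn0
  have step : ∀ (r : {r : ℚ // T ≤ r.den}) (z : ℝ), ∃ r' : {r : ℚ // T ≤ r.den},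
      r.1.den < r'.1.den ∧ window ψ r'.1 ⊆ window ψ r.1 ∧ z ∉ window ψ r'.1 ∧
      ∀ α ∈ window ψ r'.1, ∀ (P : ℤ) (Q : ℕ), 1 / (2 * ψ r.1.den) ≤ Q →
        (Q : ℝ) ≤ 1 / (2 * ψ r'.1.den) → ψ Q * (1 - loss ψ Q) ≤ |Q * α - P| := by
    intro r z
    obtain ⟨r', h1, h2⟩ := exists_next hψ_pos h_anti hT1 hT r.2 z
    exact ⟨⟨r', r.2.trans (by exact_mod_cast h1.le)⟩, h1, h2⟩
  choose F hF1 hF2 hF3 hF4 using step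
  let R : ℕ → {r : ℚ // T ≤ r.den} := fun k =>
    Nat.rec ⟨r₀, by rw [hden₀]; exact hn.2.le⟩ (fun k r => F r (y k)) k
  have hR : ∀ k, R (k + 1) = F (R k) (y k) := fun k => rfl
  have hmono : StrictMono fun k => (R k).1.den :=
    strictMono_nat_of_lt_succ fun k => by rw [hR]; exact hF1 _ _
  have hRpos : ∀ k, (0 : ℝ) < (R k).1.den := fun k => by linarith [(R k).2]
  obtain ⟨α, hα⟩ : ∃ α, ∀ k, α ∈ window ψ (R k).1 := by
    refine nested_Icc _ _ (fun k => ?_) (fun k => ?_)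
    · have h1 := hψ_pos _ (hRpos k)
      have h2 := loss_nonneg hψ_pos (hRpos k)
      have := hRpos k
      gcongr
      nlinarith
    · exact hF2 (R k) (y k)
  have hnot : α ∉ range y := by
    rintro ⟨k, rfl⟩
    exact hF3 (R k) (y k) (by rw [← hR]; exact hα (k + 1))
  rw [← hy] at hnot
  refine hnot (Or.inl ⟨?_, fun h => hnot (Or.inr h), ?_, ?_⟩)
  · have h0 := hα 0
    have hR0 : (R 0).1 = r₀ := rfl
    have hn1 : (0 : ℝ) < n := by linarith
    have h1 := loss_le_half hψ_pos h_anti hT1 hT hn.2.le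
    have h2 := hψ_pos _ hn1
    have h3 := hT _ hn.2.le
    rw [hR0] at h0
    obtain ⟨h4, h5⟩ := h0
    rw [hden₀, hnum₀] at h4 h5
    push_cast at h4 h5
    have h6 : 0 ≤ ψ n * (1 - loss ψ n) := mul_nonneg h2.le (by linarith)
    refine ⟨le_trans (by positivity) h4, h5.trans ?_⟩
    rw [div_le_one hn1]
    nlinarith
  · refine Set.infinite_of_injective_forall_mem hmono.injective fun k => ⟨(R k).1.pos, ?_⟩
    have h1 := hψ_pos _ (hRpos k)
    have h2 := loss_le_half hψ_pos h_anti hT1 hT (R k).2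
    obtain ⟨h4, h5⟩ := hα k
    rw [div_le_iff₀ (hRpos k)] at h4
    rw [le_div_iff₀ (hRpos k)] at h5
    refine (round_le _ (R k).1.num).trans ?_
    rw [abs_le]
    constructor <;> nlinarith
  · obtain ⟨q₀, hq₀⟩ := exists_nat_ge (1 / (2 * ψ (R 0).1.den))
    refine ⟨q₀, fun q hq => ?_⟩
    have hq' : 1 / (2 * ψ (R 0).1.den) ≤ (q : ℝ) := hq₀.trans (by exact_mod_cast hq)
    have hind : ∀ k, (q : ℝ) ≤ 1 / (2 * ψ (R (k + 1)).1.den) →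
        ψ q * (1 - loss ψ q) ≤ |(q : ℝ) * α - (round ((q : ℝ) * α) : ℤ)| := by
      intro k
      induction k with
      | zero => exact hF4 (R 0) (y 0) α (hα 1) _ q hq'
      | succ k ih =>
        intro hk
        rcases le_total (q : ℝ) (1 / (2 * ψ (R (k + 1)).1.den)) with h | h
        · exact ih h
        · exact hF4 (R (k + 1)) (y (k + 1)) α (hα (k + 2)) _ q h hk
    refine hind q ?_
    have h1 : (q : ℝ) ≤ (R (q + 1)).1.den := by
      exact_mod_cast (Nat.le_succ q).trans (hmono.id_le (q + 1))
    linarith [le_half_inv hψ_pos hT1 hT (R (q + 1)).2, hRpos (q + 1)]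
end
end
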